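/- Let 1 < p < ∞ and f ∈ L¹_loc(μ), with ∫ f dμ = 0 in the case μ(ℝ^d) < ∞. If min(1, N f) ∈ L^p(μ), then ‖N f‖_{L^p(μ)} ≤ C·‖M^♯ f‖_{L^p(μ)}, where C depends only on p, d, n, C₀ and β_d. -/

import Mathlib

/-!
Common definitions for formalizing Tolsa, "BMO, H¹, and Calderón–Zygmund
operators for non doubling measures".
-/

open MeasureTheory Metric Set Function
open scoped Classical
open scoped ENNReal NNReal BigOperators

noncomputable section

/-- `ℝ^d` with the Euclidean metric. -/
abbrev Euc (d : ℕ) := EuclideanSpace ℝ (Fin d)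

variable {d : ℕ}

/-- The support of a measure: points all of whose balls have positive measure. -/
def measSupp (μ : MeasureTheory.Measure (Euc d)) : Set (Euc d) :=
  {x | ∀ r : ℝ, 0 < r → 0 < μ (Metric.ball x r)}

/-- The growth condition `μ(B(x,r)) ≤ C₀ rⁿ`. -/
def GrowthBound (μ : MeasureTheory.Measure (Euc d)) (n : ℕ) (C₀ : ℝ) : Prop :=
  ∀ (x : Euc d) (r : ℝ), 0 < r → μ (Metric.ball x r) ≤ ENNReal.ofReal (C₀ * r ^ n)

/-- A (closed, axis-parallel) cube with center in the support of `μ` and positive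
side length. -/
structure CubeOf (μ : MeasureTheory.Measure (Euc d)) where
  c : Euc d
  ℓ : ℝ
  ℓ_pos : 0 < ℓ
  c_mem : c ∈ measSupp μ

namespace CubeOf

variable {μ : MeasureTheory.Measure (Euc d)}

/-- The set of points of a cube. -/
def set (Q : CubeOf μ) : Set (Euc d) := {y | ∀ i, |y i - Q.c i| ≤ Q.ℓ / 2}

/-- The concentric dilation `aQ` of a cube, as a set. -/
def dil (Q : CubeOf μ) (a : ℝ) : Set (Euc d) := {y | ∀ i, |y i - Q.c i| ≤ a * Q.ℓ / 2}

/-- The cube `2^k Q`. -/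
def pow2 (Q : CubeOf μ) (k : ℕ) : CubeOf μ :=
  ⟨Q.c, 2 ^ k * Q.ℓ, mul_pos (by positivity) Q.ℓ_pos, Q.c_mem⟩

/-- The cube `6^k Q`. -/
def pow6 (Q : CubeOf μ) (k : ℕ) : CubeOf μ :=
  ⟨Q.c, 6 ^ k * Q.ℓ, mul_pos (by positivity) Q.ℓ_pos, Q.c_mem⟩

end CubeOf

/-- `(α,β)`-doubling cube: `μ(αQ) ≤ β μ(Q)`. -/
def IsDoubling (μ : MeasureTheory.Measure (Euc d)) (α β : ℝ) (Q : CubeOf μ) : Prop :=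
  μ (Q.dil α) ≤ ENNReal.ofReal β * μ Q.set

/-- `N_{Q,R}`: the first integer `k ≥ 1` such that `l(2^k Q) ≥ l(R)`. -/
def NQR {μ : MeasureTheory.Measure (Euc d)} (Q R : CubeOf μ) : ℕ :=
  sInf {k : ℕ | 1 ≤ k ∧ R.ℓ ≤ 2 ^ k * Q.ℓ}

/-- The coefficient `K_{Q,R} = 1 + ∑_{k=1}^{N_{Q,R}} μ(2^k Q)/l(2^k Q)^n`. -/
def Kcoef {μ : MeasureTheory.Measure (Euc d)} (n : ℕ) (Q R : CubeOf μ) : ℝ :=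
  1 + ∑ k ∈ Finset.Icc 1 (NQR Q R), (μ ((Q.pow2 k).set)).toReal / ((2 ^ k * Q.ℓ) ^ n)

/-- The smallest `N ≥ 0` such that `2^N Q` is `(2,βd)`-doubling. -/
def tildeIdx (μ : MeasureTheory.Measure (Euc d)) (βd : ℝ) (Q : CubeOf μ) : ℕ :=
  sInf {N : ℕ | IsDoubling μ 2 βd (Q.pow2 N)}

/-- The cube `Q̃`: the smallest cube `2^N Q`, `N ≥ 0`, which is `(2,βd)`-doubling. -/
def CubeOf.tilde {μ : MeasureTheory.Measure (Euc d)} (Q : CubeOf μ) (βd : ℝ) : CubeOf μ :=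
  Q.pow2 (tildeIdx μ βd Q)

/-- The mean `m_Q f` of `f` over the cube `Q` with respect to `μ`. -/
def mQ (μ : MeasureTheory.Measure (Euc d)) (Q : CubeOf μ) (f : Euc d → ℝ) : ℝ :=
  ⨍ x in Q.set, f x ∂μ

/-- For `μ`-a.e. `x` there are `(2,βd)`-doubling cubes centered at `x` of arbitrarily
small side length. -/
def SmallDoublingAE (μ : MeasureTheory.Measure (Euc d)) (βd : ℝ) : Prop :=
  ∀ᵐ x ∂μ, ∀ ℓ₀ : ℝ, 0 < ℓ₀ → ∃ Q : CubeOf μ, Q.c = x ∧ Q.ℓ < ℓ₀ ∧ IsDoubling μ 2 βd Q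

/-- `C` is an admissible constant in the definition of the `RBMO(μ)` norm of `f`. -/
def RBMOBoundWith (μ : MeasureTheory.Measure (Euc d)) (n : ℕ) (βd : ℝ)
    (f : Euc d → ℝ) (C : ℝ≥0∞) : Prop :=
  (∀ Q : CubeOf μ,
    ∫⁻ x in Q.set, ENNReal.ofReal |f x - mQ μ (Q.tilde βd) f| ∂μ ≤ C * μ (Q.dil 2)) ∧
  (∀ Q R : CubeOf μ, Q.set ⊆ R.set → IsDoubling μ 2 βd Q → IsDoubling μ 2 βd R →
    ENNReal.ofReal |mQ μ Q f - mQ μ R f| ≤ C * ENNReal.ofReal (Kcoef n Q R))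

/-- The `RBMO(μ)` norm `‖f‖_*` (with value `∞` if `f ∉ RBMO(μ)`). -/
def rbmoNorm (μ : MeasureTheory.Measure (Euc d)) (n : ℕ) (βd : ℝ) (f : Euc d → ℝ) : ℝ≥0∞ :=
  sInf {C | RBMOBoundWith μ n βd f C}

/-- The conditions defining `‖f‖_{**,(ρ)}`, for a given family of numbers `fQ`. -/
def StarStarBoundWith (μ : MeasureTheory.Measure (Euc d)) (n : ℕ) (ρ : ℝ)
    (f : Euc d → ℝ) (fQ : CubeOf μ → ℝ) (C : ℝ≥0∞) : Prop :=
  (∀ Q : CubeOf μ, ∫⁻ x in Q.set, ENNReal.ofReal |f x - fQ Q| ∂μ ≤ C * μ (Q.dil ρ)) ∧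
  (∀ Q R : CubeOf μ, Q.set ⊆ R.set →
    ENNReal.ofReal |fQ Q - fQ R| ≤ C * ENNReal.ofReal (Kcoef n Q R))

/-- The norm `‖f‖_{**,(ρ)}`. -/
def starStarNorm (μ : MeasureTheory.Measure (Euc d)) (n : ℕ) (ρ : ℝ) (f : Euc d → ℝ) : ℝ≥0∞ :=
  sInf {C | ∃ fQ : CubeOf μ → ℝ, StarStarBoundWith μ n ρ f fQ C}

end

noncomputable section

variable {d : ℕ}

/-- The conditions defining the `RBMO^p(μ)` norm. -/
def RBMOpBoundWith (μ : MeasureTheory.Measure (Euc d)) (n : ℕ) (βd : ℝ) (p : ℝ)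
    (f : Euc d → ℝ) (C : ℝ≥0∞) : Prop :=
  (∀ Q : CubeOf μ,
    ∫⁻ x in Q.set, ENNReal.ofReal |f x - mQ μ (Q.tilde βd) f| ^ p ∂μ ≤ C ^ p * μ (Q.dil 2)) ∧
  (∀ Q R : CubeOf μ, Q.set ⊆ R.set → IsDoubling μ 2 βd Q → IsDoubling μ 2 βd R →
    ENNReal.ofReal |mQ μ Q f - mQ μ R f| ≤ C * ENNReal.ofReal (Kcoef n Q R))

/-- The `RBMO^p(μ)` norm `‖f‖_{*,p}`. -/
def rbmoPNorm (μ : MeasureTheory.Measure (Euc d)) (n : ℕ) (βd : ℝ) (p : ℝ)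
    (f : Euc d → ℝ) : ℝ≥0∞ :=
  sInf {C | RBMOpBoundWith μ n βd p f C}

/-- Condition (b) of Lemma `fifi` of the paper, with constant `Cb`. -/
def CondB (μ : MeasureTheory.Measure (Euc d)) (n : ℕ) (ρ : ℝ)
    (f : Euc d → ℝ) (Cb : ℝ≥0∞) : Prop :=
  (∀ Q : CubeOf μ, ∫⁻ x in Q.set, ENNReal.ofReal |f x - mQ μ Q f| ∂μ ≤ Cb * μ (Q.dil ρ)) ∧
  (∀ Q R : CubeOf μ, Q.set ⊆ R.set →
    ENNReal.ofReal |mQ μ Q f - mQ μ R f| ≤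
      Cb * ENNReal.ofReal (Kcoef n Q R) * (μ (Q.dil ρ) / μ Q.set + μ (R.dil ρ) / μ R.set))

/-- Condition (c) of Lemma `fifi` of the paper, with constant `Cc`. -/
def CondC (μ : MeasureTheory.Measure (Euc d)) (n : ℕ) (βd : ℝ)
    (f : Euc d → ℝ) (Cc : ℝ≥0∞) : Prop :=
  (∀ Q : CubeOf μ, IsDoubling μ 2 βd Q →
    ∫⁻ x in Q.set, ENNReal.ofReal |f x - mQ μ Q f| ∂μ ≤ Cc * μ Q.set) ∧
  (∀ Q R : CubeOf μ, Q.set ⊆ R.set → IsDoubling μ 2 βd Q → IsDoubling μ 2 βd R →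
    ENNReal.ofReal |mQ μ Q f - mQ μ R f| ≤ Cc * ENNReal.ofReal (Kcoef n Q R))

/-- The conditions defining the norm `‖f‖_∘`, relative to a choice `αQ` of minimizers. -/
def CircBoundWith (μ : MeasureTheory.Measure (Euc d)) (n : ℕ) (βd : ℝ)
    (f : Euc d → ℝ) (αQ : CubeOf μ → ℝ) (C : ℝ≥0∞) : Prop :=
  (∀ Q : CubeOf μ,
    ∫⁻ x in Q.set, ENNReal.ofReal |f x - αQ (Q.tilde βd)| ∂μ ≤ C * μ (Q.dil 2)) ∧
  (∀ Q R : CubeOf μ, Q.set ⊆ R.set → IsDoubling μ 2 βd Q → IsDoubling μ 2 βd R →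
    ENNReal.ofReal |αQ Q - αQ R| ≤ C * ENNReal.ofReal (Kcoef n Q R))

/-- The norm `‖f‖_∘`, relative to a choice `αQ` of minimizers. -/
def circNorm (μ : MeasureTheory.Measure (Euc d)) (n : ℕ) (βd : ℝ)
    (f : Euc d → ℝ) (αQ : CubeOf μ → ℝ) : ℝ≥0∞ :=
  sInf {C | CircBoundWith μ n βd f αQ C}

/-- An atomic block: a function supported on a cube `R`, with zero integral, of the
form `b = ∑ λⱼ aⱼ` with `aⱼ` supported on cubes `Qⱼ ⊆ R` and
`‖aⱼ‖_{L∞(μ)} ≤ (μ(2Qⱼ) K_{Qⱼ,R})⁻¹`. -/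
structure AtomicBlock (μ : MeasureTheory.Measure (Euc d)) (n : ℕ) where
  b : Euc d → ℝ
  R : CubeOf μ
  lam : ℕ → ℝ
  a : ℕ → Euc d → ℝ
  Qj : ℕ → CubeOf μ
  integrable : MeasureTheory.Integrable b μ
  supp_b : ∀ x ∉ R.set, b x = 0
  int_zero : ∫ x, b x ∂μ = 0
  Qj_sub : ∀ j, (Qj j).set ⊆ R.set
  a_supp : ∀ j, ∀ x ∉ (Qj j).set, a j x = 0
  a_meas : ∀ j, MeasureTheory.AEStronglyMeasurable (a j) μ
  a_bound : ∀ j, MeasureTheory.eLpNorm (a j) ⊤ μ ≤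
    (μ ((Qj j).dil 2) * ENNReal.ofReal (Kcoef n (Qj j) R))⁻¹
  lam_summable : Summable fun j => |lam j|
  b_eq : ∀ᵐ x ∂μ, HasSum (fun j => lam j * a j x) (b x)

/-- `|b|_{H^{1,∞}_atb(μ)} = ∑ⱼ |λⱼ|` for the given decomposition. -/
def AtomicBlock.size {μ : MeasureTheory.Measure (Euc d)} {n : ℕ}
    (B : AtomicBlock μ n) : ℝ :=
  ∑' j, |B.lam j|

/-- The `H^{1,∞}_atb(μ)` norm (with value `∞` outside the space). -/
def hatbNorm (μ : MeasureTheory.Measure (Euc d)) (n : ℕ) (f : Euc d → ℝ) : ℝ≥0∞ :=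
  sInf {t : ℝ≥0∞ | ∃ B : ℕ → AtomicBlock μ n,
    (∀ᵐ x ∂μ, HasSum (fun i => (B i).b x) (f x)) ∧
    t = ∑' i, ENNReal.ofReal ((B i).size)}

/-- A `p`-atomic block: like an atomic block, but with the size condition
`‖aⱼ‖_{L^p(μ)} ≤ μ(2Qⱼ)^{1/p-1} K_{Qⱼ,R}⁻¹`. -/
structure PAtomicBlock (μ : MeasureTheory.Measure (Euc d)) (n : ℕ) (p : ℝ) where
  b : Euc d → ℝ
  R : CubeOf μ
  lam : ℕ → ℝ
  a : ℕ → Euc d → ℝ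
  Qj : ℕ → CubeOf μ
  integrable : MeasureTheory.Integrable b μ
  supp_b : ∀ x ∉ R.set, b x = 0
  int_zero : ∫ x, b x ∂μ = 0
  Qj_sub : ∀ j, (Qj j).set ⊆ R.set
  a_supp : ∀ j, ∀ x ∉ (Qj j).set, a j x = 0
  a_meas : ∀ j, MeasureTheory.AEStronglyMeasurable (a j) μ
  a_bound : ∀ j, MeasureTheory.eLpNorm (a j) (ENNReal.ofReal p) μ ≤
    μ ((Qj j).dil 2) ^ (1 / p - 1) * (ENNReal.ofReal (Kcoef n (Qj j) R))⁻¹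
  lam_summable : Summable fun j => |lam j|
  b_eq : ∀ᵐ x ∂μ, HasSum (fun j => lam j * a j x) (b x)

/-- `|b|_{H^{1,p}_atb(μ)} = ∑ⱼ |λⱼ|` for the given decomposition. -/
def PAtomicBlock.size {μ : MeasureTheory.Measure (Euc d)} {n : ℕ} {p : ℝ}
    (B : PAtomicBlock μ n p) : ℝ :=
  ∑' j, |B.lam j|

/-- The `H^{1,p}_atb(μ)` norm (with value `∞` outside the space). -/
def hatbPNorm (μ : MeasureTheory.Measure (Euc d)) (n : ℕ) (p : ℝ) (f : Euc d → ℝ) : ℝ≥0∞ :=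
  sInf {t : ℝ≥0∞ | ∃ B : ℕ → PAtomicBlock μ n p,
    (∀ᵐ x ∂μ, HasSum (fun i => (B i).b x) (f x)) ∧
    t = ∑' i, ENNReal.ofReal ((B i).size)}

/-- A Calderón–Zygmund kernel of dimension `n`, with constant `Ck` and Hölder
exponent `δ`. -/
def CZKernelBound (n : ℕ) (k : Euc d → Euc d → ℝ) (Ck δ : ℝ) : Prop :=
  (∀ x y : Euc d, x ≠ y → |k x y| ≤ Ck / dist x y ^ (n : ℝ)) ∧
  (∀ x x' y : Euc d, x ≠ y → dist x x' ≤ dist x y / 2 →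
    |k x y - k x' y| + |k y x - k y x'| ≤ Ck * dist x x' ^ δ / dist x y ^ ((n : ℝ) + δ))

/-- The truncated operator `T_ε f(x) = ∫_{|x-y|>ε} k(x,y) f(y) dμ(y)`. -/
def trunc (μ : MeasureTheory.Measure (Euc d)) (k : Euc d → Euc d → ℝ) (ε : ℝ)
    (f : Euc d → ℝ) (x : Euc d) : ℝ :=
  ∫ y in {y | ε < dist x y}, k x y * f y ∂μ

/-- The non-centered doubling maximal operator `N`. -/
def Nop (μ : MeasureTheory.Measure (Euc d)) (βd : ℝ) (f : Euc d → ℝ) (x : Euc d) : ℝ≥0∞ :=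
  ⨆ (Q : CubeOf μ) (_ : x ∈ Q.set) (_ : IsDoubling μ 2 βd Q),
    (∫⁻ y in Q.set, ENNReal.ofReal |f y| ∂μ) / μ Q.set

/-- The sharp maximal operator `M^♯`. -/
def Msharp (μ : MeasureTheory.Measure (Euc d)) (n : ℕ) (βd : ℝ)
    (f : Euc d → ℝ) (x : Euc d) : ℝ≥0∞ :=
  (⨆ (Q : CubeOf μ) (_ : x ∈ Q.set),
    (∫⁻ y in Q.set, ENNReal.ofReal |f y - mQ μ (Q.tilde βd) f| ∂μ) / μ (Q.dil (3/2))) +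
  ⨆ (Q : CubeOf μ) (R : CubeOf μ) (_ : x ∈ Q.set) (_ : Q.set ⊆ R.set)
      (_ : IsDoubling μ 2 βd Q) (_ : IsDoubling μ 2 βd R),
    ENNReal.ofReal (|mQ μ Q f - mQ μ R f| / Kcoef n Q R)

/-- The weight functions `w_i = χ_{Q_i} / ∑_k χ_{Q_k}` of the Calderón–Zygmund
decomposition. -/
def czWeight {μ : MeasureTheory.Measure (Euc d)} (J : Finset ℕ) (Q : ℕ → CubeOf μ)
    (i : ℕ) (x : Euc d) : ℝ :=
  Set.indicator (Q i).set
    (fun y => (((J.filter fun kk => y ∈ (Q kk).set).card : ℝ))⁻¹) x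

/-- The smallest `(6,6^{n+1})`-doubling cube of the form `6^k Q`, `k ≥ 1`. -/
def smallest6Doubling (μ : MeasureTheory.Measure (Euc d)) (n : ℕ) (Q : CubeOf μ) : CubeOf μ :=
  Q.pow6 (sInf {k : ℕ | 1 ≤ k ∧ IsDoubling μ 6 (6 ^ (n + 1)) (Q.pow6 k)})

end


/-!
The norms are compared by a good-`λ` inequality. Requiring the point to lie in the interior of the
cubes turns `M^♯` and the largest doubling mean `sup |m_Q f|` into lower semicontinuous functions
`G ≤ M^♯` and `T ≤ N f`. Comparing a doubling cube `Q` with the doubling cube generated by `(4/3)Q`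
gives `N f ≤ β G + T`, so it suffices to show `μ {T > 2λ, G ≤ δλ} ≤ C δ μ {T > λ}`.

Where `G ≤ δλ`, the means over two doubling cubes of comparable size differ by at most `λ / 8`,
because `K_{Q,P̃}` is bounded. Centered at a point of `{T > 2λ, G ≤ δλ}` there is thus a nearly
maximal doubling cube `S` of large mean, contained in `{T > λ}`; side lengths are bounded because
`min(1, N f) ∈ L^p`, or because `∫ f dμ = 0`. Inside `S`, the bad points are covered by cubes
`V ⊆ (5/4)S` on which `f` deviates on average by `3λ / 8` from a constant, while `G ≤ δλ` bounds
the total deviation on `(5/4)S` by `δλ β μ(S)`. The Besicovitch covering theorem is used twice: for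
the cubes `V` in each `S`, and for the cubes `S`. As the measure `μ` is not doubling, the cubes have
to be centered at the points they cover.
-/

/-! ### Layer cakes and good-`λ` inequalities -/

section GoodLambda

variable {α : Type*}

theorem lowerSemicontinuous_iSup_mem_of_isOpen {ι γ : Type*} [TopologicalSpace α]
    [CompleteLinearOrder γ] {U : ι → Set α} (hU : ∀ i, IsOpen (U i)) (v : ι → γ) :
    LowerSemicontinuous fun x => ⨆ (i) (_ : x ∈ U i), v i := by
  intro x a ha
  simp only [lt_iSup_iff] at ha
  obtain ⟨i, hxi, hai⟩ := ha
  filter_upwards [(hU i).mem_nhds hxi] with y hyi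
  exact hai.trans_le (le_iSup₂_of_le i hyi le_rfl)

variable [MeasurableSpace α] {μ : Measure α} {p : ℝ} {F G T : α → ℝ≥0∞}

theorem lintegral_rpow_eq_lintegral_meas_ofReal_lt_mul (hF : AEMeasurable F μ)
    (hfin : ∀ᵐ x ∂μ, F x ≠ ∞) (hp : 0 < p) :
    ∫⁻ x, F x ^ p ∂μ = ENNReal.ofReal p *
      ∫⁻ l in Ioi 0, μ {x | ENNReal.ofReal l < F x} * ENNReal.ofReal (l ^ (p - 1)) := by
  have hpow : ∫⁻ x, F x ^ p ∂μ = ∫⁻ x, ENNReal.ofReal ((F x).toReal ^ p) ∂μ := by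
    refine lintegral_congr_ae ?_
    filter_upwards [hfin] with x hx
    rw [← ENNReal.ofReal_rpow_of_nonneg ENNReal.toReal_nonneg hp.le, ENNReal.ofReal_toReal hx]
  rw [hpow, lintegral_rpow_eq_lintegral_meas_lt_mul μ
    (ae_of_all _ fun _ => ENNReal.toReal_nonneg) hF.ennreal_toReal hp]
  congr 1
  refine setLIntegral_congr_fun measurableSet_Ioi fun l hl => ?_
  congr 1
  refine measure_congr ?_
  filter_upwards [hfin] with x hx
  exact propext (ENNReal.ofReal_lt_iff_lt_toReal (le_of_lt hl) hx).symm

theorem lintegral_rpow_le_of_meas_lt_le (hF : AEMeasurable F μ) (hT : AEMeasurable T μ)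
    (hG : AEMeasurable G μ) (hFfin : ∀ᵐ x ∂μ, F x ≠ ∞) (hTfin : ∀ᵐ x ∂μ, T x ≠ ∞)
    (hGfin : ∀ᵐ x ∂μ, G x ≠ ∞) (hp : 0 < p) {c : ℝ≥0∞}
    (h : ∀ l : ℝ, 0 < l → μ {x | ENNReal.ofReal l < F x} ≤
      c * μ {x | ENNReal.ofReal l < T x} + μ {x | ENNReal.ofReal l < G x}) :
    ∫⁻ x, F x ^ p ∂μ ≤ c * ∫⁻ x, T x ^ p ∂μ + ∫⁻ x, G x ^ p ∂μ := by
  have hmeas : Measurable fun l : ℝ =>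
      μ {x | ENNReal.ofReal l < T x} * ENNReal.ofReal (l ^ (p - 1)) := by
    have hanti : Antitone fun l : ℝ => μ {x | ENNReal.ofReal l < T x} :=
      fun a b hab => measure_mono fun x (hx : ENNReal.ofReal b < T x) =>
        (ENNReal.ofReal_le_ofReal hab).trans_lt hx
    exact hanti.measurable.mul (by fun_prop)
  rw [lintegral_rpow_eq_lintegral_meas_ofReal_lt_mul hF hFfin hp,
    lintegral_rpow_eq_lintegral_meas_ofReal_lt_mul hT hTfin hp,
    lintegral_rpow_eq_lintegral_meas_ofReal_lt_mul hG hGfin hp, mul_left_comm, ← mul_add]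
  gcongr
  rw [← lintegral_const_mul _ hmeas, ← lintegral_add_left (hmeas.const_mul _)]
  refine setLIntegral_mono' measurableSet_Ioi fun l hl => ?_
  rw [← mul_assoc, ← add_mul]
  gcongr
  exact h l hl

theorem le_two_mul_of_le_inv_two_mul_add {a b : ℝ≥0∞} (ha : a ≠ ∞) (h : a ≤ 2⁻¹ * a + b) :
    a ≤ 2 * b := by
  rw [← ENNReal.div_eq_inv_mul] at h
  have hhalf : a / 2 ≤ b := by
    rw [← ENNReal.add_le_add_iff_left (ENNReal.div_ne_top ha two_ne_zero), ENNReal.add_halves]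
    exact h
  calc a = 2 * (a / 2) := (ENNReal.mul_div_cancel two_ne_zero ENNReal.ofNat_ne_top).symm
    _ ≤ 2 * b := by gcongr

theorem ae_ne_top_of_lintegral_rpow_ne_top (hF : Measurable F) (hp : 0 < p)
    (hFp : ∫⁻ x, F x ^ p ∂μ ≠ ∞) : ∀ᵐ x ∂μ, F x ≠ ∞ := by
  filter_upwards [ae_lt_top (hF.pow_const p) hFp] with x hx
  exact ((ENNReal.rpow_lt_top_iff_of_pos hp).1 hx).ne

theorem lintegral_const_mul_rpow (hF : Measurable F) (hp : 0 ≤ p) (c : ℝ≥0∞) :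
    ∫⁻ x, (c * F x) ^ p ∂μ = c ^ p * ∫⁻ x, F x ^ p ∂μ := by
  simp only [ENNReal.mul_rpow_of_nonneg _ _ hp]
  exact lintegral_const_mul _ (hF.pow_const p)

/-- `T` and `G` satisfy a good-`λ` inequality with respect to `μ`, with parameters `δ` and `η`. -/
def GoodLambda (μ : Measure α) (T G : α → ℝ≥0∞) (δ : ℝ) (η : ℝ≥0∞) : Prop :=
  ∀ l : ℝ, 0 < l → μ ({x | ENNReal.ofReal (2 * l) < T x} ∩ {x | G x ≤ ENNReal.ofReal (δ * l)}) ≤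
    η * μ {x | ENNReal.ofReal l < T x}

namespace GoodLambda

variable {δ : ℝ} {η : ℝ≥0∞}

theorem min_const (h : GoodLambda μ T G δ η) (M : ℝ≥0∞) :
    GoodLambda μ (fun x => min (T x) M) G δ η := by
  intro l hl
  simp only [lt_min_iff]
  by_cases hM : ENNReal.ofReal (2 * l) < M
  · have hM' : ENNReal.ofReal l < M :=
      (ENNReal.ofReal_le_ofReal (by linarith)).trans_lt hM
    simpa only [hM, hM', and_true] using h l hl
  · simp only [hM, and_false, ofPred_false, empty_inter, measure_empty, zero_le]

theorem meas_lt_half_le (h : GoodLambda μ T G δ η) (hδ : 0 < δ) {l : ℝ} (hl : 0 < l) :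
    μ {x | ENNReal.ofReal l < 2⁻¹ * T x} ≤ η * μ {x | ENNReal.ofReal l < T x} +
      μ {x | ENNReal.ofReal l < (ENNReal.ofReal δ)⁻¹ * G x} := by
  simp only [← ENNReal.div_eq_inv_mul, ENNReal.lt_div_iff_mul_lt (.inl two_ne_zero)
    (.inl ENNReal.ofNat_ne_top), ENNReal.lt_div_iff_mul_lt (.inl (ENNReal.ofReal_pos.2 hδ).ne')
    (.inl ENNReal.ofReal_ne_top), ← ENNReal.ofReal_mul hl.le]
  rw [← ENNReal.ofReal_ofNat 2]
  simp only [← ENNReal.ofReal_mul hl.le, mul_comm l]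
  refine (measure_mono fun x hx => ?_).trans
    ((measure_union_le _ _).trans (add_le_add_left (h l hl) _))
  exact (le_or_gt (G x) (ENNReal.ofReal (δ * l))).imp (fun hG => ⟨hx, hG⟩) id

theorem lintegral_rpow_le_of_ne_top (h : GoodLambda μ T G δ η) (hT : Measurable T)
    (hG : Measurable G) (hp : 0 < p) (hδ : 0 < δ) (hη : 2 ^ p * η ≤ 2⁻¹)
    (hTp : ∫⁻ x, T x ^ p ∂μ ≠ ∞) :
    ∫⁻ x, T x ^ p ∂μ ≤ 2 * (2 / ENNReal.ofReal δ) ^ p * ∫⁻ x, G x ^ p ∂μ := by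
  have hδ' : (ENNReal.ofReal δ)⁻¹ ≠ ∞ := ENNReal.inv_ne_top.2 (ENNReal.ofReal_pos.2 hδ).ne'
  rcases eq_or_ne (∫⁻ x, G x ^ p ∂μ) ∞ with hGp | hGp
  · have hpos : 0 < (2 / ENNReal.ofReal δ) ^ p :=
      ENNReal.rpow_pos (ENNReal.div_pos two_ne_zero ENNReal.ofReal_ne_top)
        (ENNReal.mul_ne_top ENNReal.ofNat_ne_top hδ')
    rw [hGp, ENNReal.mul_top (mul_ne_zero two_ne_zero hpos.ne')]
    exact le_top
  have hTfin := ae_ne_top_of_lintegral_rpow_ne_top hT hp hTp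
  have hGfin := ae_ne_top_of_lintegral_rpow_ne_top hG hp hGp
  have hlayer : ∫⁻ x, (2⁻¹ * T x) ^ p ∂μ ≤
      η * ∫⁻ x, T x ^ p ∂μ + ∫⁻ x, ((ENNReal.ofReal δ)⁻¹ * G x) ^ p ∂μ :=
    lintegral_rpow_le_of_meas_lt_le (hT.const_mul _).aemeasurable hT.aemeasurable
      (hG.const_mul _).aemeasurable (hTfin.mono fun x hx => by finiteness) hTfin
      (hGfin.mono fun x hx => ENNReal.mul_ne_top hδ' hx) hp fun l hl => h.meas_lt_half_le hδ hl
  rw [lintegral_const_mul_rpow hT hp.le, lintegral_const_mul_rpow hG hp.le] at hlayer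
  rw [mul_assoc]
  refine le_two_mul_of_le_inv_two_mul_add hTp ?_
  calc ∫⁻ x, T x ^ p ∂μ
      = 2 ^ p * (2⁻¹ ^ p * ∫⁻ x, T x ^ p ∂μ) := by
        rw [← mul_assoc, ← ENNReal.mul_rpow_of_nonneg _ _ hp.le,
          ENNReal.mul_inv_cancel two_ne_zero ENNReal.ofNat_ne_top, ENNReal.one_rpow, one_mul]
    _ ≤ 2 ^ p * (η * ∫⁻ x, T x ^ p ∂μ + (ENNReal.ofReal δ)⁻¹ ^ p * ∫⁻ x, G x ^ p ∂μ) := by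
        gcongr
    _ = 2 ^ p * η * ∫⁻ x, T x ^ p ∂μ + (2 / ENNReal.ofReal δ) ^ p * ∫⁻ x, G x ^ p ∂μ := by
        rw [mul_add, ← mul_assoc, ← mul_assoc, div_eq_mul_inv, ENNReal.mul_rpow_of_nonneg _ _ hp.le]
    _ ≤ 2⁻¹ * ∫⁻ x, T x ^ p ∂μ + (2 / ENNReal.ofReal δ) ^ p * ∫⁻ x, G x ^ p ∂μ := by
        gcongr

end GoodLambda

theorem min_natCast_le_mul_min_one (a : ℝ≥0∞) (M : ℕ) : min a M ≤ (M + 1) * min 1 a := by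
  rcases le_total 1 a with h | h
  · rw [min_eq_left h, mul_one]
    exact (min_le_right _ _).trans le_self_add
  · rw [min_eq_right h, add_mul, one_mul]
    exact (min_le_left _ _).trans le_add_self

theorem lintegral_min_natCast_rpow_ne_top (hT : Measurable T) (hp : 0 < p)
    (hfin : ∫⁻ x, (min 1 (T x)) ^ p ∂μ < ∞) (M : ℕ) : ∫⁻ x, (min (T x) M) ^ p ∂μ ≠ ∞ := by
  have hle : ∫⁻ x, (min (T x) M) ^ p ∂μ ≤
      ((M : ℝ≥0∞) + 1) ^ p * ∫⁻ x, (min 1 (T x)) ^ p ∂μ := by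
    rw [← lintegral_const_mul _ ((measurable_const.min hT).pow_const p)]
    gcongr with x
    rw [← ENNReal.mul_rpow_of_nonneg _ _ hp.le]
    gcongr
    exact min_natCast_le_mul_min_one _ M
  refine ne_top_of_le_ne_top (ENNReal.mul_ne_top ?_ hfin.ne) hle
  exact ENNReal.rpow_ne_top_of_nonneg hp.le (by finiteness)

theorem tendsto_lintegral_min_natCast_rpow (hT : Measurable T) (hp : 0 < p) :
    Filter.Tendsto (fun M : ℕ => ∫⁻ x, (min (T x) M) ^ p ∂μ) Filter.atTop
      (nhds (∫⁻ x, T x ^ p ∂μ)) := by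
  refine lintegral_tendsto_of_tendsto_of_monotone
    (fun M => ((hT.min measurable_const).pow_const p).aemeasurable)
    (ae_of_all _ fun x a b hab => ?_) (ae_of_all _ fun x => ?_)
  · dsimp only
    gcongr
  · have hmin : Filter.Tendsto (fun M : ℕ => min (T x) (M : ℝ≥0∞)) Filter.atTop
        (nhds (min (T x) ∞)) := tendsto_const_nhds.min ENNReal.tendsto_nat_nhds_top
    rw [min_top_right] at hmin
    exact (ENNReal.continuous_rpow_const.tendsto _).comp hmin

theorem GoodLambda.lintegral_rpow_le {δ : ℝ} {η : ℝ≥0∞} (h : GoodLambda μ T G δ η)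
    (hT : Measurable T) (hG : Measurable G) (hp : 0 < p) (hδ : 0 < δ) (hη : 2 ^ p * η ≤ 2⁻¹)
    (hfin : ∫⁻ x, (min 1 (T x)) ^ p ∂μ < ∞) :
    ∫⁻ x, T x ^ p ∂μ ≤ 2 * (2 / ENNReal.ofReal δ) ^ p * ∫⁻ x, G x ^ p ∂μ :=
  le_of_tendsto' (tendsto_lintegral_min_natCast_rpow hT hp) fun M =>
    (h.min_const M).lintegral_rpow_le_of_ne_top (hT.min measurable_const) hG hp hδ hη
      (lintegral_min_natCast_rpow_ne_top hT hp hfin M)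

end GoodLambda

/-! ### Cubes -/

namespace CubeOf

section Geometry

variable {d : ℕ} {μ : Measure (Euc d)}

/-- The concentric cube `aQ`, as a cube; its set of points is `Q.dil a`. -/
def scale (Q : CubeOf μ) (a : ℝ) (ha : 0 < a) : CubeOf μ :=
  ⟨Q.c, a * Q.ℓ, mul_pos ha Q.ℓ_pos, Q.c_mem⟩

theorem dil_one (Q : CubeOf μ) : Q.dil 1 = Q.set := by
  simp only [dil, set, one_mul]

theorem scale_dil (Q : CubeOf μ) {a : ℝ} (ha : 0 < a) (b : ℝ) :
    (Q.scale a ha).dil b = Q.dil (b * a) := by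
  simp only [dil, scale, mul_assoc]

theorem scale_set (Q : CubeOf μ) {a : ℝ} (ha : 0 < a) : (Q.scale a ha).set = Q.dil a := by
  rw [← dil_one, scale_dil, one_mul]

theorem pow2_dil_two (Q : CubeOf μ) (k : ℕ) : (Q.pow2 k).dil 2 = (Q.pow2 (k + 1)).set := by
  simp only [dil, set, pow2, pow_succ', mul_assoc]

theorem pow2_zero (Q : CubeOf μ) : Q.pow2 0 = Q := by
  simp only [pow2, pow_zero, one_mul]

theorem dil_mono (Q : CubeOf μ) : Monotone Q.dil := fun a b hab y hy i =>
  (hy i).trans <| by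
    have := Q.ℓ_pos
    gcongr

theorem subset_dil (Q : CubeOf μ) {a : ℝ} (ha : 1 ≤ a) : Q.set ⊆ Q.dil a := by
  rw [← dil_one]
  exact Q.dil_mono ha

theorem isClosed_dil (Q : CubeOf μ) (a : ℝ) : IsClosed (Q.dil a) := by
  simp only [dil, ofPred_forall]
  exact isClosed_iInter fun i => isClosed_le (by fun_prop) continuous_const

theorem isClosed_set (Q : CubeOf μ) : IsClosed Q.set := Q.dil_one ▸ Q.isClosed_dil 1

theorem measurableSet_dil (Q : CubeOf μ) (a : ℝ) : MeasurableSet (Q.dil a) :=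
  (Q.isClosed_dil a).measurableSet

theorem measurableSet_set (Q : CubeOf μ) : MeasurableSet Q.set := Q.isClosed_set.measurableSet

theorem mem_interior_set (Q : CubeOf μ) {y : Euc d} (hy : ∀ i, |y i - Q.c i| < Q.ℓ / 2) :
    y ∈ interior Q.set := by
  refine mem_interior.2 ⟨{z | ∀ i, |z i - Q.c i| < Q.ℓ / 2}, fun z hz i => (hz i).le, ?_, hy⟩
  simp only [ofPred_forall]
  exact isOpen_iInter_of_finite fun i => isOpen_lt (by fun_prop) continuous_const

theorem c_mem_interior_set (Q : CubeOf μ) : Q.c ∈ interior Q.set :=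
  Q.mem_interior_set fun i => by simpa only [sub_self, abs_zero] using half_pos Q.ℓ_pos

theorem dil_subset_interior_scale (Q : CubeOf μ) {a b : ℝ} (hab : a < b) (hb : 0 < b) :
    Q.dil a ⊆ interior (Q.scale b hb).set := fun _ hy =>
  mem_interior_set _ fun i => (hy i).trans_lt <| by
    have := Q.ℓ_pos
    simp only [scale]
    gcongr

theorem subset_iff {Q P : CubeOf μ} :
    Q.set ⊆ P.set ↔ ∀ i, |Q.c i - P.c i| + Q.ℓ / 2 ≤ P.ℓ / 2 := by
  constructor
  · intro h i
    have hcorner : ∀ t : ℝ, |t| = Q.ℓ / 2 → |Q.c i + t - P.c i| ≤ P.ℓ / 2 := fun t ht =>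
      h (a := WithLp.toLp 2 fun j => Q.c j + t) (fun j => by simp [ht]) i
    have hpos := hcorner (Q.ℓ / 2) (abs_of_pos (half_pos Q.ℓ_pos))
    have hneg := hcorner (-(Q.ℓ / 2)) (by rw [abs_neg, abs_of_pos (half_pos Q.ℓ_pos)])
    rw [abs_le] at hpos hneg
    rcases abs_cases (Q.c i - P.c i) with ⟨habs, -⟩ | ⟨habs, -⟩ <;> rw [habs] <;> linarith
  · intro h y hy i
    linarith [h i, hy i, abs_sub_le (y i) (Q.c i) (P.c i)]

theorem pow2_subset_pow2 {Q P : CubeOf μ} (h : Q.set ⊆ P.set) (k : ℕ) :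
    (Q.pow2 k).set ⊆ (P.pow2 k).set := by
  rw [subset_iff] at h ⊢
  intro i
  have hk : (1 : ℝ) ≤ 2 ^ k := one_le_pow₀ one_le_two
  calc |Q.c i - P.c i| + 2 ^ k * Q.ℓ / 2
      ≤ 2 ^ k * |Q.c i - P.c i| + 2 ^ k * Q.ℓ / 2 := by
        gcongr
        exact le_mul_of_one_le_left (abs_nonneg _) hk
    _ = 2 ^ k * (|Q.c i - P.c i| + Q.ℓ / 2) := by ring
    _ ≤ 2 ^ k * (P.ℓ / 2) := by
        gcongr
        exact h i
    _ = 2 ^ k * P.ℓ / 2 := by ring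

theorem subset_pow2 (Q : CubeOf μ) (k : ℕ) : Q.set ⊆ (Q.pow2 k).set :=
  Q.subset_dil (one_le_pow₀ one_le_two)

theorem subset_tilde (Q : CubeOf μ) (β : ℝ) : Q.set ⊆ (Q.tilde β).set := Q.subset_pow2 _

theorem ℓ_le_ℓ_tilde (Q : CubeOf μ) (β : ℝ) : Q.ℓ ≤ (Q.tilde β).ℓ :=
  le_mul_of_one_le_left Q.ℓ_pos.le (one_le_pow₀ one_le_two)

theorem ball_subset_set (Q : CubeOf μ) : ball Q.c (Q.ℓ / 2) ⊆ Q.set := fun y hy i => by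
  rw [mem_ball, dist_eq_norm] at hy
  exact (PiLp.norm_apply_le (y - Q.c) i).trans hy.le

theorem set_subset_ball (Q : CubeOf μ) : Q.set ⊆ ball Q.c ((d + 1) * Q.ℓ) := by
  intro y hy
  have hℓ := Q.ℓ_pos
  have hsum : ∑ i, dist (y i) (Q.c i) ^ 2 ≤ (d * Q.ℓ) ^ 2 := calc
    ∑ i, dist (y i) (Q.c i) ^ 2 ≤ (∑ i, dist (y i) (Q.c i)) ^ 2 :=
        Finset.sum_sq_le_sq_sum_of_nonneg fun _ _ => dist_nonneg
    _ ≤ (∑ _i : Fin d, Q.ℓ) ^ 2 := by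
        gcongr with i
        exact (hy i).trans (half_le_self hℓ.le)
    _ = (d * Q.ℓ) ^ 2 := by simp
  calc dist y Q.c = √(∑ i, dist (y i) (Q.c i) ^ 2) := EuclideanSpace.dist_eq _ _
    _ ≤ d * Q.ℓ := Real.sqrt_le_iff.2 ⟨by positivity, hsum⟩
    _ < (d + 1) * Q.ℓ := by gcongr; exact lt_add_one _

theorem isCompact_set (Q : CubeOf μ) : IsCompact Q.set :=
  isCompact_of_isClosed_isBounded Q.isClosed_set (isBounded_ball.subset Q.set_subset_ball)

theorem eventually_mem_dil (Q : CubeOf μ) (y : Euc d) : ∀ᶠ a in Filter.atTop, y ∈ Q.dil a := by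
  refine Filter.eventually_all.2 fun i => ?_
  filter_upwards [Filter.eventually_ge_atTop (|y i - Q.c i| * 2 / Q.ℓ)] with a ha
  rwa [div_le_iff₀ Q.ℓ_pos, ← le_div_iff₀ two_pos] at ha

theorem measure_set_pos (Q : CubeOf μ) : 0 < μ Q.set :=
  (Q.c_mem _ (half_pos Q.ℓ_pos)).trans_le (measure_mono Q.ball_subset_set)

theorem measure_dil_ne_zero (Q : CubeOf μ) {a : ℝ} (ha : 0 < a) : μ (Q.dil a) ≠ 0 := by
  rw [← Q.scale_set ha]
  exact (measure_set_pos _).ne'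

end Geometry

end CubeOf

section Growth

variable {d n : ℕ} {C₀ β : ℝ} {μ : Measure (Euc d)}

namespace GrowthBound

theorem isLocallyFiniteMeasure (hg : GrowthBound μ n C₀) : IsLocallyFiniteMeasure μ :=
  ⟨fun x => ⟨ball x 1, ball_mem_nhds x one_pos, (hg x 1 one_pos).trans_lt ENNReal.ofReal_lt_top⟩⟩

theorem pos (hg : GrowthBound μ n C₀) (Q : CubeOf μ) : 0 < C₀ := by
  have h := (Q.c_mem 1 one_pos).trans_le (hg Q.c 1 one_pos)
  rwa [one_pow, mul_one, ENNReal.ofReal_pos] at h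

theorem measureReal_set_le (hg : GrowthBound μ n C₀) (Q : CubeOf μ) :
    μ.real Q.set ≤ C₀ * ((d + 1) * Q.ℓ) ^ n := by
  have hℓ := Q.ℓ_pos
  have hC₀ := hg.pos Q
  exact ENNReal.toReal_le_of_le_ofReal (by positivity)
    ((measure_mono Q.set_subset_ball).trans (hg Q.c _ (by positivity)))

end GrowthBound

namespace CubeOf

section LocallyFinite

variable [IsLocallyFiniteMeasure μ]

theorem measure_set_ne_top (Q : CubeOf μ) : μ Q.set ≠ ∞ := Q.isCompact_set.measure_lt_top.ne

theorem measure_dil_ne_top (Q : CubeOf μ) {a : ℝ} (ha : 0 < a) : μ (Q.dil a) ≠ ∞ := by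
  rw [← Q.scale_set ha]
  exact measure_set_ne_top _

theorem measureReal_set_pos (Q : CubeOf μ) : 0 < μ.real Q.set :=
  ENNReal.toReal_pos Q.measure_set_pos.ne' Q.measure_set_ne_top

theorem mul_measureReal_pow2_le_of_not_isDoubling (hβ : 0 ≤ β) (P : CubeOf μ) {k : ℕ}
    (h : ¬ IsDoubling μ 2 β (P.pow2 k)) :
    β * μ.real (P.pow2 k).set ≤ μ.real (P.pow2 (k + 1)).set := by
  rw [IsDoubling, not_le, pow2_dil_two] at h
  have h' := ENNReal.toReal_mono (measure_set_ne_top _) h.le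
  rwa [ENNReal.toReal_mul, ENNReal.toReal_ofReal hβ] at h'

theorem pow_mul_measureReal_pow2_le_of_not_isDoubling (hβ : 0 ≤ β) (P : CubeOf μ) (k : ℕ) {s : ℕ}
    (h : ∀ j < s, ¬ IsDoubling μ 2 β (P.pow2 (k + j))) :
    β ^ s * μ.real (P.pow2 k).set ≤ μ.real (P.pow2 (k + s)).set := by
  induction s with
  | zero => rw [pow_zero, one_mul, add_zero]
  | succ s ih =>
    calc β ^ (s + 1) * μ.real (P.pow2 k).set = β * (β ^ s * μ.real (P.pow2 k).set) := by ring
      _ ≤ β * μ.real (P.pow2 (k + s)).set := by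
          gcongr
          exact ih fun j hj => h j (hj.trans s.lt_succ_self)
      _ ≤ μ.real (P.pow2 (k + (s + 1))).set :=
          P.mul_measureReal_pow2_le_of_not_isDoubling hβ (h s s.lt_succ_self)

end LocallyFinite

theorem exists_isDoubling_pow2 (hg : GrowthBound μ n C₀) (hβ : 2 ^ n < β) (P : CubeOf μ) :
    ∃ N, IsDoubling μ 2 β (P.pow2 N) := by
  by_contra! hnot
  have := hg.isLocallyFiniteMeasure
  have hβ₀ : 0 < β := (by positivity : (0 : ℝ) < 2 ^ n).trans hβ
  have hgrowth : ∀ N : ℕ, (β / 2 ^ n) ^ N * μ.real P.set ≤ C₀ * ((d + 1) * P.ℓ) ^ n := by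
    intro N
    have hchain := P.pow_mul_measureReal_pow2_le_of_not_isDoubling hβ₀.le 0 (s := N)
      fun j _ => hnot _
    rw [pow2_zero, zero_add] at hchain
    rw [div_pow, div_mul_eq_mul_div, div_le_iff₀ (by positivity)]
    calc β ^ N * μ.real P.set ≤ C₀ * ((d + 1) * (2 ^ N * P.ℓ)) ^ n :=
          hchain.trans (hg.measureReal_set_le _)
      _ = C₀ * ((d + 1) * P.ℓ) ^ n * (2 ^ n) ^ N := by
          simp only [mul_pow]
          ring
  obtain ⟨N, hN⟩ := pow_unbounded_of_one_lt (C₀ * ((d + 1) * P.ℓ) ^ n / μ.real P.set)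
    ((one_lt_div (by positivity)).2 hβ)
  rw [div_lt_iff₀ P.measureReal_set_pos] at hN
  exact (hgrowth N).not_gt hN

theorem isDoubling_tilde (hg : GrowthBound μ n C₀) (hβ : 2 ^ n < β) (P : CubeOf μ) :
    IsDoubling μ 2 β (P.tilde β) :=
  Nat.sInf_mem (s := {N | IsDoubling μ 2 β (P.pow2 N)}) (exists_isDoubling_pow2 hg hβ P)

theorem tilde_eq_self {P : CubeOf μ} (h : IsDoubling μ 2 β P) : P.tilde β = P := by
  have hidx : tildeIdx μ β P = 0 := Nat.sInf_eq_zero.2 (.inl (by rwa [mem_ofPred_eq, pow2_zero]))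
  rw [tilde, hidx, pow2_zero]

end CubeOf

theorem Kcoef_pos (Q R : CubeOf μ) : 0 < Kcoef n Q R := by
  have hℓ := Q.ℓ_pos
  rw [Kcoef]
  positivity

theorem sum_range_pow_sub_le {q : ℝ} (hq₀ : 0 ≤ q) (hq₁ : q < 1) (N m : ℕ) :
    ∑ k ∈ Finset.range (N + 1 + m), q ^ (N - k) ≤ (1 - q)⁻¹ + m := by
  rw [Finset.sum_range_add]
  gcongr
  · calc ∑ k ∈ Finset.range (N + 1), q ^ (N - k) = ∑ k ∈ Finset.range (N + 1), q ^ k :=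
        Finset.sum_range_reflect (q ^ ·) (N + 1)
      _ ≤ ∑' k, q ^ k :=
        (summable_geometric_of_lt_one hq₀ hq₁).sum_le_tsum _ fun k _ => pow_nonneg hq₀ k
      _ = (1 - q)⁻¹ := tsum_geometric_of_lt_one hq₀ hq₁
  · simp [add_assoc]

/-- A bound for `K_{Q,P̃}` when `Q ⊆ P` and `l(P) ≤ 2^m l(Q)`. -/
noncomputable def tildeKBound (d n : ℕ) (C₀ β : ℝ) (m : ℕ) : ℝ :=
  1 + C₀ * ((d + 1) * 2 ^ m) ^ n * ((1 - 2 ^ n / β)⁻¹ + m)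

-- Below `N`, the index with `P̃ = 2^N P`, no `2^k P` is doubling, so `μ(2^k Q) ≤ μ(2^k P)`
-- decays geometrically as `k` decreases from `N`.
theorem measureReal_pow2_div_le (hg : GrowthBound μ n C₀) (hβ : 0 < β) {Q P : CubeOf μ}
    (hQP : Q.set ⊆ P.set) {m : ℕ} (hℓ : P.ℓ ≤ 2 ^ m * Q.ℓ) (k : ℕ) :
    μ.real (Q.pow2 k).set / (2 ^ k * Q.ℓ) ^ n ≤
      C₀ * ((d + 1) * 2 ^ m) ^ n * (2 ^ n / β) ^ (tildeIdx μ β P - k) := by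
  have := hg.isLocallyFiniteMeasure
  have hC₀ := hg.pos Q
  have hQℓ := Q.ℓ_pos
  have hPℓ := P.ℓ_pos
  set s := tildeIdx μ β P - k
  have hchain : β ^ s * μ.real (P.pow2 k).set ≤ μ.real (P.pow2 (k + s)).set :=
    P.pow_mul_measureReal_pow2_le_of_not_isDoubling hβ.le k fun j hj =>
      Nat.notMem_of_lt_sInf (s := {N | IsDoubling μ 2 β (P.pow2 N)})
        (show k + j < tildeIdx μ β P by omega)
  rw [div_le_iff₀ (by positivity), div_pow, mul_div_assoc', div_mul_eq_mul_div,
    le_div_iff₀' (by positivity)]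
  calc β ^ s * μ.real (Q.pow2 k).set ≤ β ^ s * μ.real (P.pow2 k).set := by
        gcongr
        · exact CubeOf.measure_set_ne_top _
        · exact CubeOf.pow2_subset_pow2 hQP k
    _ ≤ C₀ * ((d + 1) * (2 ^ (k + s) * P.ℓ)) ^ n := hchain.trans (hg.measureReal_set_le _)
    _ ≤ C₀ * ((d + 1) * (2 ^ (k + s) * (2 ^ m * Q.ℓ))) ^ n := by gcongr
    _ = C₀ * ((d + 1) * 2 ^ m) ^ n * (2 ^ n) ^ s * (2 ^ k * Q.ℓ) ^ n := by
        simp only [mul_pow, pow_add]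
        ring

theorem Kcoef_tilde_le (hg : GrowthBound μ n C₀) (hβ : 2 ^ n < β) {Q P : CubeOf μ}
    (hQP : Q.set ⊆ P.set) {m : ℕ} (hm : 1 ≤ m) (hℓ : P.ℓ ≤ 2 ^ m * Q.ℓ) :
    Kcoef n Q (P.tilde β) ≤ tildeKBound d n C₀ β m := by
  have hβ₀ : 0 < β := (by positivity : (0 : ℝ) < 2 ^ n).trans hβ
  have hC₀ := hg.pos Q
  have hQℓ := Q.ℓ_pos
  set N := tildeIdx μ β P
  have hNQR : NQR Q (P.tilde β) ≤ N + m := Nat.sInf_le ⟨by omega, calc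
    2 ^ N * P.ℓ ≤ 2 ^ N * (2 ^ m * Q.ℓ) := by gcongr
    _ = 2 ^ (N + m) * Q.ℓ := by ring⟩
  rw [Kcoef, tildeKBound]
  gcongr
  calc ∑ k ∈ Finset.Icc 1 (NQR Q (P.tilde β)), μ.real (Q.pow2 k).set / (2 ^ k * Q.ℓ) ^ n
      ≤ ∑ k ∈ Finset.range (N + 1 + m), μ.real (Q.pow2 k).set / (2 ^ k * Q.ℓ) ^ n := by
        refine Finset.sum_le_sum_of_subset_of_nonneg (fun k hk => ?_) fun _ _ _ => by positivity
        rw [Finset.mem_Icc] at hk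
        rw [Finset.mem_range]
        omega
    _ ≤ ∑ k ∈ Finset.range (N + 1 + m), C₀ * ((d + 1) * 2 ^ m) ^ n * (2 ^ n / β) ^ (N - k) :=
        Finset.sum_le_sum fun k _ => measureReal_pow2_div_le hg hβ₀ hQP hℓ k
    _ ≤ C₀ * ((d + 1) * 2 ^ m) ^ n * ((1 - 2 ^ n / β)⁻¹ + m) := by
        rw [← Finset.mul_sum]
        gcongr
        exact sum_range_pow_sub_le (by positivity) ((div_lt_one hβ₀).2 hβ) N m

end Growth

/-! ### Means and maximal operators -/

section Means

variable {d : ℕ} {μ : Measure (Euc d)} {f : Euc d → ℝ}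

theorem setLIntegral_ofReal_abs_le_add (Q : CubeOf μ) (f : Euc d → ℝ) (a : ℝ) :
    ∫⁻ y in Q.set, ENNReal.ofReal |f y| ∂μ ≤
      ∫⁻ y in Q.set, ENNReal.ofReal |f y - a| ∂μ + ENNReal.ofReal |a| * μ Q.set := by
  rw [← setLIntegral_const, ← lintegral_add_right _ measurable_const]
  refine lintegral_mono fun y => ?_
  rw [← ENNReal.ofReal_add (abs_nonneg _) (abs_nonneg _)]
  refine ENNReal.ofReal_le_ofReal ?_
  simpa only [sub_add_cancel] using abs_add_le (f y - a) a

variable [IsLocallyFiniteMeasure μ]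

theorem setIntegral_sub_const_eq (hf : LocallyIntegrable f μ) (Q : CubeOf μ) (a : ℝ) :
    ∫ y in Q.set, (f y - a) ∂μ = μ.real Q.set * (mQ μ Q f - a) := by
  rw [integral_sub (hf.integrableOn_isCompact Q.isCompact_set)
    (integrableOn_const Q.measure_set_ne_top), setIntegral_const, smul_eq_mul, mul_sub]
  congr 1
  exact (measure_smul_setAverage f Q.measure_set_ne_top).symm

theorem ofReal_abs_mQ_sub_mul_le (hf : LocallyIntegrable f μ) (Q : CubeOf μ) (a : ℝ) :
    ENNReal.ofReal |mQ μ Q f - a| * μ Q.set ≤ ∫⁻ y in Q.set, ENNReal.ofReal |f y - a| ∂μ := by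
  have h := enorm_integral_le_lintegral_enorm (μ := μ.restrict Q.set) fun y => f y - a
  rw [setIntegral_sub_const_eq hf, enorm_mul, mul_comm] at h
  simpa only [Real.enorm_eq_ofReal_abs, abs_of_nonneg measureReal_nonneg,
    ofReal_measureReal Q.measure_set_ne_top] using h

theorem measure_set_le_mul_setLIntegral_abs_sub (hf : LocallyIntegrable f μ) (Q : CubeOf μ)
    {a c : ℝ} (hc : 0 ≤ c) (h : 1 ≤ c * |mQ μ Q f - a|) :
    μ Q.set ≤ ENNReal.ofReal c * ∫⁻ y in Q.set, ENNReal.ofReal |f y - a| ∂μ := calc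
  μ Q.set ≤ ENNReal.ofReal (c * |mQ μ Q f - a|) * μ Q.set :=
      le_mul_of_one_le_left' (ENNReal.one_le_ofReal.2 h)
  _ = ENNReal.ofReal c * (ENNReal.ofReal |mQ μ Q f - a| * μ Q.set) := by
      rw [ENNReal.ofReal_mul hc, mul_assoc]
  _ ≤ _ := mul_le_mul_right (ofReal_abs_mQ_sub_mul_le hf Q a) _

theorem ofReal_abs_mQ_le_div (hf : LocallyIntegrable f μ) (Q : CubeOf μ) :
    ENNReal.ofReal |mQ μ Q f| ≤ (∫⁻ y in Q.set, ENNReal.ofReal |f y| ∂μ) / μ Q.set := by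
  rw [ENNReal.le_div_iff_mul_le (.inl Q.measure_set_pos.ne') (.inl Q.measure_set_ne_top)]
  simpa only [sub_zero] using ofReal_abs_mQ_sub_mul_le hf Q 0

end Means

section MaximalOperators

variable {d : ℕ}

/-- The sharp maximal operator restricted to cubes having the point in their interior, which makes
it lower semicontinuous. -/
noncomputable def interiorMsharp (μ : Measure (Euc d)) (n : ℕ) (β : ℝ) (f : Euc d → ℝ)
    (x : Euc d) : ℝ≥0∞ :=
  (⨆ (Q : CubeOf μ) (_ : x ∈ interior Q.set),
    (∫⁻ y in Q.set, ENNReal.ofReal |f y - mQ μ (Q.tilde β) f| ∂μ) / μ (Q.dil (3 / 2))) +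
  ⨆ (Q : CubeOf μ) (_ : x ∈ interior Q.set), ⨆ (R : CubeOf μ) (_ : Q.set ⊆ R.set)
      (_ : IsDoubling μ 2 β Q) (_ : IsDoubling μ 2 β R),
    ENNReal.ofReal (|mQ μ Q f - mQ μ R f| / Kcoef n Q R)

/-- The largest absolute mean `|m_Q f|` over doubling cubes `Q` having the point in their interior;
a lower semicontinuous substitute for `Nop`. -/
noncomputable def doublingMeanMax (μ : Measure (Euc d)) (β : ℝ) (f : Euc d → ℝ) (x : Euc d) :
    ℝ≥0∞ :=
  ⨆ (Q : CubeOf μ) (_ : x ∈ interior Q.set), ⨆ (_ : IsDoubling μ 2 β Q),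
    ENNReal.ofReal |mQ μ Q f|

/-- The doubling cubes with `x` in their interior on which the mean of `f` exceeds `s` in absolute
value. -/
def largeMeanCubes (μ : Measure (Euc d)) (β : ℝ) (f : Euc d → ℝ) (x : Euc d) (s : ℝ) :
    Set (CubeOf μ) :=
  {Q | x ∈ interior Q.set ∧ IsDoubling μ 2 β Q ∧ s < |mQ μ Q f|}

/-- Around `x`, the mean of `f` changes by at most `ε` when passing from a doubling cube `Q` to the
doubling cube `P̃` generated by a cube `P ⊇ Q` of comparable size. The factor `4` is the largest
ratio of side lengths met in the stopping time argument. -/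
def MeanOscBoundAt (μ : Measure (Euc d)) (β : ℝ) (f : Euc d → ℝ) (ε : ℝ) (x : Euc d) : Prop :=
  ∀ ⦃Q P : CubeOf μ⦄, x ∈ interior Q.set → IsDoubling μ 2 β Q → Q.set ⊆ P.set →
    P.ℓ ≤ 4 * Q.ℓ → |mQ μ Q f - mQ μ (P.tilde β) f| ≤ ε

variable {n : ℕ} {C₀ β t s ε : ℝ} {μ : Measure (Euc d)} {f : Euc d → ℝ} {x : Euc d}

theorem measurable_interiorMsharp : Measurable (interiorMsharp μ n β f) :=
  (lowerSemicontinuous_iSup_mem_of_isOpen (fun _ => isOpen_interior) _).measurable.add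
    (lowerSemicontinuous_iSup_mem_of_isOpen (fun _ => isOpen_interior) _).measurable

theorem measurable_doublingMeanMax : Measurable (doublingMeanMax μ β f) :=
  (lowerSemicontinuous_iSup_mem_of_isOpen (fun _ => isOpen_interior) _).measurable

theorem interiorMsharp_le_Msharp (x : Euc d) : interiorMsharp μ n β f x ≤ Msharp μ n β f x :=
  add_le_add
    (iSup_mono fun _ => iSup_le fun hx => le_iSup_of_le (interior_subset hx) le_rfl)
    (iSup_mono fun _ => iSup_le fun hx => iSup_mono fun _ =>
      le_iSup_of_le (interior_subset hx) le_rfl)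

theorem doublingMeanMax_le_Nop [IsLocallyFiniteMeasure μ] (hf : LocallyIntegrable f μ)
    (x : Euc d) : doublingMeanMax μ β f x ≤ Nop μ β f x :=
  iSup_mono fun Q => iSup_le fun hx => le_iSup_of_le (interior_subset hx) <|
    iSup_mono fun _ => ofReal_abs_mQ_le_div hf Q

theorem setLIntegral_sub_tilde_le [IsLocallyFiniteMeasure μ] (Q : CubeOf μ)
    (hx : x ∈ interior Q.set) :
    ∫⁻ y in Q.set, ENNReal.ofReal |f y - mQ μ (Q.tilde β) f| ∂μ ≤
      interiorMsharp μ n β f x * μ (Q.dil (3 / 2)) := by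
  have h32 : (0 : ℝ) < 3 / 2 := by norm_num
  rw [← ENNReal.div_le_iff (Q.measure_dil_ne_zero h32) (Q.measure_dil_ne_top h32)]
  refine le_trans ?_ le_self_add
  exact le_iSup₂_of_le Q hx le_rfl

theorem ofReal_lt_doublingMeanMax_iff (hs : 0 ≤ s) :
    ENNReal.ofReal s < doublingMeanMax μ β f x ↔ (largeMeanCubes μ β f x s).Nonempty := by
  simp only [doublingMeanMax, lt_iSup_iff, ENNReal.ofReal_lt_ofReal_iff_of_nonneg hs,
    exists_prop, largeMeanCubes, Set.Nonempty, mem_ofPred_eq]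

-- The cube `Q' = (4/3)Q` has `Q` in its interior, and `(3/2)Q' = 2Q` is controlled since `Q` is
-- doubling.
theorem Nop_le (hg : GrowthBound μ n C₀) (hβ : 2 ^ n < β) (x : Euc d) :
    Nop μ β f x ≤ ENNReal.ofReal β * interiorMsharp μ n β f x + doublingMeanMax μ β f x := by
  have := hg.isLocallyFiniteMeasure
  refine iSup_le fun Q => iSup_le fun hx => iSup_le fun hQ => ?_
  rw [ENNReal.div_le_iff Q.measure_set_pos.ne' Q.measure_set_ne_top]
  set Q' := Q.scale (4 / 3) (by norm_num)
  have hQQ' : Q.set ⊆ interior Q'.set := by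
    rw [← Q.dil_one]
    exact Q.dil_subset_interior_scale (by norm_num) _
  have hdil : Q'.dil (3 / 2) = Q.dil 2 := by
    rw [CubeOf.scale_dil]
    norm_num
  have hmean : ENNReal.ofReal |mQ μ (Q'.tilde β) f| ≤ doublingMeanMax μ β f x :=
    le_iSup₂_of_le (Q'.tilde β) (interior_mono (Q'.subset_tilde β) (hQQ' hx)) <|
      le_iSup_of_le (CubeOf.isDoubling_tilde hg hβ Q') le_rfl
  have hosc : ∫⁻ y in Q.set, ENNReal.ofReal |f y - mQ μ (Q'.tilde β) f| ∂μ ≤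
      interiorMsharp μ n β f x * (ENNReal.ofReal β * μ Q.set) := calc
    _ ≤ ∫⁻ y in Q'.set, ENNReal.ofReal |f y - mQ μ (Q'.tilde β) f| ∂μ :=
        lintegral_mono_set (hQQ'.trans interior_subset)
    _ ≤ interiorMsharp μ n β f x * μ (Q.dil 2) := hdil ▸ setLIntegral_sub_tilde_le Q' (hQQ' hx)
    _ ≤ _ := by
        gcongr
        exact hQ
  calc ∫⁻ y in Q.set, ENNReal.ofReal |f y| ∂μ
      ≤ ∫⁻ y in Q.set, ENNReal.ofReal |f y - mQ μ (Q'.tilde β) f| ∂μ +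
          ENNReal.ofReal |mQ μ (Q'.tilde β) f| * μ Q.set :=
        setLIntegral_ofReal_abs_le_add Q f _
    _ ≤ interiorMsharp μ n β f x * (ENNReal.ofReal β * μ Q.set) +
          doublingMeanMax μ β f x * μ Q.set := by gcongr
    _ = _ := by ring

theorem meanOscBoundAt_of_interiorMsharp_le (hg : GrowthBound μ n C₀) (hβ : 2 ^ n < β)
    (ht : 0 ≤ t) (hG : interiorMsharp μ n β f x ≤ ENNReal.ofReal t)
    (hε : tildeKBound d n C₀ β 2 * t ≤ ε) : MeanOscBoundAt μ β f ε x := by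
  intro Q P hx hQ hQP hℓ
  set R := P.tilde β
  have hratio : ENNReal.ofReal (|mQ μ Q f - mQ μ R f| / Kcoef n Q R) ≤ ENNReal.ofReal t := by
    refine le_trans ?_ (le_add_self.trans hG)
    refine le_iSup₂_of_le Q hx <| le_iSup₂_of_le R (hQP.trans (P.subset_tilde β)) ?_
    exact le_iSup₂_of_le hQ (CubeOf.isDoubling_tilde hg hβ P) le_rfl
  rw [ENNReal.ofReal_le_ofReal_iff ht, div_le_iff₀ (Kcoef_pos Q R), mul_comm] at hratio
  calc |mQ μ Q f - mQ μ R f| ≤ Kcoef n Q R * t := hratio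
    _ ≤ tildeKBound d n C₀ β 2 * t := by
        gcongr
        exact Kcoef_tilde_le hg hβ hQP one_le_two (hℓ.trans_eq (by norm_num))
    _ ≤ ε := hε

theorem MeanOscBoundAt.tilde_mem_largeMeanCubes (hosc : MeanOscBoundAt μ β f ε x)
    (hg : GrowthBound μ n C₀) (hβ : 2 ^ n < β) {Q P : CubeOf μ}
    (hQ : Q ∈ largeMeanCubes μ β f x s) (hQP : Q.set ⊆ P.set) (hℓ : P.ℓ ≤ 4 * Q.ℓ) :
    P.tilde β ∈ largeMeanCubes μ β f x (s - ε) := by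
  obtain ⟨hxQ, hQd, hQs⟩ := hQ
  refine ⟨interior_mono (hQP.trans (P.subset_tilde β)) hxQ, CubeOf.isDoubling_tilde hg hβ P, ?_⟩
  linarith [hosc hxQ hQd hQP hℓ, abs_sub_abs_le_abs_sub (mQ μ Q f) (mQ μ (P.tilde β) f)]

end MaximalOperators

/-! ### Besicovitch coverings -/

section Besicovitch

/-- The number of disjoint families needed in the Besicovitch covering theorem in `α`. -/
noncomputable def besicovitchNumber (α : Type*) [MetricSpace α] [HasBesicovitchCovering α] : ℕ :=
  (HasBesicovitchCovering.no_satelliteConfig (α := α)).choose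

section MetricSpace

variable {α : Type*} [MetricSpace α] [SecondCountableTopology α] [MeasurableSpace α]
  [OpensMeasurableSpace α] [HasBesicovitchCovering α] {μ ν : Measure α} {A U : Set α}

theorem measure_le_besicovitchNumber_mul_of_radius_le {r : α → ℝ} {R : ℝ}
    (hr : ∀ x ∈ A, 0 < r x) (hR : ∀ x ∈ A, r x ≤ R) (hU : ∀ x ∈ A, closedBall x (r x) ⊆ U)
    (h : ∀ x ∈ A, μ (A ∩ closedBall x (r x)) ≤ ν (closedBall x (r x))) :
    μ A ≤ besicovitchNumber α * ν U := by
  obtain ⟨τ, hτ, hN⟩ := (HasBesicovitchCovering.no_satelliteConfig (α := α)).choose_spec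
  let q : Besicovitch.BallPackage A α :=
    { c := (↑)
      r := fun x => r x
      rpos := fun x => hr x x.2
      r_bound := R
      r_le := fun x => hR x x.2 }
  obtain ⟨s, hdisj, hcov⟩ := Besicovitch.exist_disjoint_covering_families hτ hN q
  have hcount : ∀ i, (s i).Countable := fun i =>
    (hdisj i).countable_of_nonempty_interior fun x _ =>
      (nonempty_ball.2 (q.rpos x)).mono ball_subset_interior_closedBall
  have hA : A ⊆ ⋃ i, ⋃ x ∈ s i, A ∩ closedBall x (r x) := fun y hy => by
    obtain ⟨i, x, hx, hyx⟩ : ∃ i, ∃ x ∈ s i, y ∈ ball (x : α) (r x) := by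
      simpa only [mem_iUnion, exists_prop] using hcov (mem_range_self (⟨y, hy⟩ : A))
    exact mem_iUnion.2 ⟨i, mem_iUnion₂.2 ⟨x, hx, hy, ball_subset_closedBall hyx⟩⟩
  have hfamily : ∀ i, μ (⋃ x ∈ s i, A ∩ closedBall x (r x)) ≤ ν U := fun i => calc
    μ (⋃ x ∈ s i, A ∩ closedBall x (r x)) ≤ ∑' x : s i, μ (A ∩ closedBall x (r x)) :=
      measure_biUnion_le μ (hcount i) _
    _ ≤ ∑' x : s i, ν (closedBall x (r x)) := ENNReal.tsum_le_tsum fun x => h x x.1.2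
    _ = ν (⋃ x ∈ s i, closedBall x (r x)) :=
      (measure_biUnion (hcount i) (hdisj i) fun _ _ => measurableSet_closedBall).symm
    _ ≤ ν U := measure_mono (iUnion₂_subset fun x _ => hU x x.2)
  calc μ A ≤ μ (⋃ i, ⋃ x ∈ s i, A ∩ closedBall x (r x)) := measure_mono hA
    _ ≤ ∑ i, μ (⋃ x ∈ s i, A ∩ closedBall x (r x)) := measure_iUnion_fintype_le _ _
    _ ≤ ∑ _i : Fin (besicovitchNumber α), ν U := Finset.sum_le_sum fun i _ => hfamily i
    _ = besicovitchNumber α * ν U := by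
      rw [Finset.sum_const, Finset.card_univ, Fintype.card_fin, nsmul_eq_mul]

theorem measure_le_besicovitchNumber_mul
    (h : ∀ x ∈ A, ∃ r > 0, closedBall x r ⊆ U ∧ μ (A ∩ closedBall x r) ≤ ν (closedBall x r)) :
    μ A ≤ besicovitchNumber α * ν U := by
  choose! r hr hU hμν using h
  set B : ℕ → Set α := fun k => {x ∈ A | r x ≤ k}
  have hBA : ∀ k, B k ⊆ A := fun k => sep_subset _ _
  have hB : Monotone B := fun a b hab x hx => ⟨hx.1, hx.2.trans (Nat.cast_le.2 hab)⟩
  have hAB : A = ⋃ k, B k := Subset.antisymm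
    (fun x hx => mem_iUnion.2 ((exists_nat_ge (r x)).imp fun _ hk => ⟨hx, hk⟩))
    (iUnion_subset hBA)
  rw [hAB, hB.measure_iUnion]
  refine iSup_le fun k => measure_le_besicovitchNumber_mul_of_radius_le (R := k)
    (fun x hx => hr x hx.1) (fun x hx => hx.2) (fun x hx => hU x hx.1) fun x hx => ?_
  exact (measure_mono (inter_subset_inter_left _ (hBA k))).trans (hμν x hx.1)

end MetricSpace

theorem CubeOf.set_eq_preimage_closedBall {d : ℕ} {μ : Measure (Euc d)} (Q : CubeOf μ) :
    Q.set = WithLp.ofLp ⁻¹' closedBall (WithLp.ofLp Q.c) (Q.ℓ / 2) := by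
  ext y
  rw [mem_preimage, mem_closedBall, dist_pi_le_iff (half_pos Q.ℓ_pos).le]
  rfl

theorem measure_le_besicovitchNumber_mul_of_cubes {d : ℕ} {μ ν : Measure (Euc d)}
    {A U : Set (Euc d)}
    (h : ∀ x ∈ A, ∃ Q : CubeOf μ, Q.c = x ∧ Q.set ⊆ U ∧ μ (A ∩ Q.set) ≤ ν Q.set) :
    μ A ≤ besicovitchNumber (Fin d → ℝ) * ν U := by
  let e : Euc d ≃ᵐ (Fin d → ℝ) := (MeasurableEquiv.toLp 2 (Fin d → ℝ)).symm
  have hmap : ∀ (ρ : Measure (Euc d)) (s : Set (Euc d)), ρ.map e (e '' s) = ρ s := fun ρ s => by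
    rw [e.map_apply, preimage_image_eq s e.injective]
  rw [← hmap μ A, ← hmap ν U]
  refine measure_le_besicovitchNumber_mul (forall_mem_image.2 fun x hx => ?_)
  obtain ⟨Q, rfl, hQU, hQ⟩ := h x hx
  have hball : closedBall (e Q.c) (Q.ℓ / 2) = e '' Q.set := by
    rw [Q.set_eq_preimage_closedBall]
    exact (image_preimage_eq _ e.surjective).symm
  refine ⟨Q.ℓ / 2, half_pos Q.ℓ_pos, hball ▸ image_mono hQU, ?_⟩
  rwa [hball, ← image_inter e.injective, hmap, hmap]

end Besicovitch

/-! ### Boundedness of the cubes with large mean -/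

section BoundedSides

open Filter Topology

variable {d n : ℕ} {C₀ β p s ε : ℝ} {μ : Measure (Euc d)} {f : Euc d → ℝ} {x : Euc d}

theorem CubeOf.aecover_dil (Q : CubeOf μ) : AECover μ atTop Q.dil where
  ae_eventually_mem := .of_forall Q.eventually_mem_dil
  measurableSet := Q.measurableSet_dil

theorem CubeOf.dil_subset_dil_two {B Q : CubeOf μ} {a : ℝ} (hB : B.c ∈ Q.set)
    (ha : a * B.ℓ ≤ Q.ℓ) : B.dil a ⊆ Q.dil 2 := fun z hz i => by
  linarith [hz i, hB i, abs_sub_le (z i) (B.c i) (Q.c i)]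

theorem exists_measure_set_le_of_lt_abs_mQ [IsLocallyFiniteMeasure μ]
    (hf : LocallyIntegrable f μ) (hp : 0 < p)
    (hfin : ∫⁻ x, (min 1 (Nop μ β f x)) ^ p ∂μ < ∞) (hs : 0 < s) :
    ∃ M ≠ ∞, ∀ Q : CubeOf μ, IsDoubling μ 2 β Q → s < |mQ μ Q f| → μ Q.set ≤ M := by
  set c : ℝ≥0∞ := (min 1 (ENNReal.ofReal s)) ^ p
  have hc₀ : c ≠ 0 :=
    (ENNReal.rpow_pos (lt_min one_pos (ENNReal.ofReal_pos.2 hs)) (min_lt_of_left_lt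
      ENNReal.one_lt_top).ne).ne'
  have hc : c ≠ ∞ :=
    ENNReal.rpow_ne_top_of_nonneg hp.le (min_lt_of_left_lt ENNReal.one_lt_top).ne
  refine ⟨_, (ENNReal.div_lt_top hfin.ne hc₀).ne, fun Q hQ hsQ => ?_⟩
  have hle : ∀ y ∈ Q.set, c ≤ (min 1 (Nop μ β f y)) ^ p := fun y hy => by
    have hsN : ENNReal.ofReal s ≤ Nop μ β f y := calc
      ENNReal.ofReal s ≤ ENNReal.ofReal |mQ μ Q f| := ENNReal.ofReal_le_ofReal hsQ.le
      _ ≤ (∫⁻ y in Q.set, ENNReal.ofReal |f y| ∂μ) / μ Q.set := ofReal_abs_mQ_le_div hf Q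
      _ ≤ Nop μ β f y := le_iSup₂_of_le Q hy (le_iSup_of_le hQ le_rfl)
    exact ENNReal.rpow_le_rpow (min_le_min_left 1 hsN) hp.le
  rw [ENNReal.le_div_iff_mul_le (.inl hc₀) (.inl hc), mul_comm, ← setLIntegral_const]
  exact (setLIntegral_mono' Q.measurableSet_set hle).trans (setLIntegral_le_lintegral _ _)

theorem bddAbove_ℓ_largeMeanCubes_of_measure_univ_eq_top [IsLocallyFiniteMeasure μ]
    (hμ : μ univ = ∞) (hf : LocallyIntegrable f μ) (hp : 0 < p)
    (hfin : ∫⁻ x, (min 1 (Nop μ β f x)) ^ p ∂μ < ∞) (hx : x ∈ measSupp μ) (hs : 0 < s) :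
    BddAbove (CubeOf.ℓ '' largeMeanCubes μ β f x s) := by
  obtain ⟨M, hM, hQM⟩ := exists_measure_set_le_of_lt_abs_mQ hf hp hfin hs
  let B : CubeOf μ := ⟨x, 1, one_pos, hx⟩
  have hB : Tendsto (fun a => μ (B.dil a)) atTop (𝓝 ∞) := by
    simpa only [lintegral_one, Measure.restrict_apply_univ, hμ] using
      B.aecover_dil.lintegral_tendsto_of_countably_generated (f := fun _ => 1) aemeasurable_const
  obtain ⟨a, ha⟩ := (hB.eventually_const_lt
    (ENNReal.mul_lt_top (ENNReal.ofReal_lt_top (r := β)) hM.lt_top)).exists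
  refine ⟨a, forall_mem_image.2 fun Q ⟨hxQ, hQ, hsQ⟩ => ?_⟩
  by_contra! hℓ
  refine ha.not_ge ?_
  calc μ (B.dil a) ≤ μ (Q.dil 2) := measure_mono <|
        CubeOf.dil_subset_dil_two (interior_subset hxQ) ((mul_one a).trans_le hℓ.le)
    _ ≤ ENNReal.ofReal β * μ Q.set := hQ
    _ ≤ ENNReal.ofReal β * M := by
        gcongr
        exact hQM Q hQ hsQ

theorem setLIntegral_abs_sub_mQ_le [IsLocallyFiniteMeasure μ] (hf : LocallyIntegrable f μ)
    {B P : CubeOf μ} (hx : x ∈ interior B.set) (hP : IsDoubling μ 2 β P) (hBP : B.set ⊆ P.set) :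
    ∫⁻ y in P.set, ENNReal.ofReal |f y - mQ μ B f| ∂μ ≤
      interiorMsharp μ n β f x * μ univ +
        interiorMsharp μ n β f x * μ univ / μ B.set * μ univ := by
  set b := mQ μ B f
  have hosc : ∫⁻ y in P.set, ENNReal.ofReal |f y - mQ μ P f| ∂μ ≤
      interiorMsharp μ n β f x * μ univ := by
    have h := setLIntegral_sub_tilde_le (n := n) (β := β) (f := f) P (interior_mono hBP hx)
    rw [CubeOf.tilde_eq_self hP] at h
    exact h.trans (mul_le_mul_right (measure_mono (subset_univ _)) _)
  have hmean : ENNReal.ofReal |mQ μ P f - b| ≤ interiorMsharp μ n β f x * μ univ / μ B.set := by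
    rw [abs_sub_comm, ENNReal.le_div_iff_mul_le (.inl B.measure_set_pos.ne')
      (.inl B.measure_set_ne_top)]
    exact (ofReal_abs_mQ_sub_mul_le hf B _).trans ((lintegral_mono_set hBP).trans hosc)
  have hsplit := setLIntegral_ofReal_abs_le_add P (fun y => f y - b) (mQ μ P f - b)
  simp only [sub_sub_sub_cancel_right] at hsplit
  refine hsplit.trans ?_
  gcongr
  exact subset_univ _

theorem integrable_of_interiorMsharp_ne_top [IsFiniteMeasure μ] (hg : GrowthBound μ n C₀)
    (hβ : 2 ^ n < β) (hf : LocallyIntegrable f μ) (hx : x ∈ measSupp μ)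
    (hG : interiorMsharp μ n β f x ≠ ∞) : Integrable f μ := by
  let B : CubeOf μ := ⟨x, 1, one_pos, hx⟩
  set I := interiorMsharp μ n β f x * μ univ + interiorMsharp μ n β f x * μ univ / μ B.set * μ univ
  have hI : I ≠ ∞ := by
    have := ENNReal.div_ne_top (ENNReal.mul_ne_top hG (measure_ne_top μ univ)) B.measure_set_pos.ne'
    finiteness
  have hcover : AECover μ atTop fun k : ℕ => (B.pow2 k).set :=
    B.aecover_dil.comp_tendsto (tendsto_pow_atTop_atTop_of_one_lt one_lt_two)
  have hint : Integrable (fun y => f y - mQ μ B f) μ :=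
    hcover.integrable_of_lintegral_enorm_bounded I.toReal
      (hf.aestronglyMeasurable.sub aestronglyMeasurable_const) <| .of_forall fun k => by
        simp only [Real.enorm_eq_ofReal_abs]
        rw [ENNReal.ofReal_toReal hI]
        exact (lintegral_mono_set (CubeOf.subset_tilde _ β)).trans <|
          setLIntegral_abs_sub_mQ_le hf B.c_mem_interior_set (CubeOf.isDoubling_tilde hg hβ _)
            ((B.subset_pow2 k).trans (CubeOf.subset_tilde _ β))
  exact (hint.add (integrable_const (mQ μ B f))).congr (.of_forall fun y => sub_add_cancel _ _)

theorem abs_mQ_mul_measureReal_le [IsLocallyFiniteMeasure μ] (hf : Integrable f μ)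
    (hf₀ : ∫ y, f y ∂μ = 0) (P : CubeOf μ) :
    |mQ μ P f| * μ.real P.set ≤ ∫ y in P.setᶜ, |f y| ∂μ := by
  have hmean : ∫ y in P.setᶜ, f y ∂μ = -(μ.real P.set * mQ μ P f) := by
    rw [setIntegral_compl P.measurableSet_set hf, hf₀, zero_sub]
    congr 1
    exact (measure_smul_setAverage f P.measure_set_ne_top).symm
  calc |mQ μ P f| * μ.real P.set = |∫ y in P.setᶜ, f y ∂μ| := by
        rw [hmean, abs_neg, abs_mul, abs_of_nonneg measureReal_nonneg, mul_comm]
    _ ≤ ∫ y in P.setᶜ, |f y| ∂μ := abs_integral_le_integral_abs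

theorem bddAbove_ℓ_largeMeanCubes_of_integral_eq_zero (hg : GrowthBound μ n C₀) (hβ : 2 ^ n < β)
    (hf : Integrable f μ) (hf₀ : ∫ y, f y ∂μ = 0) (hx : x ∈ measSupp μ)
    (hosc : MeanOscBoundAt μ β f ε x) (hs : ε < s) :
    BddAbove (CubeOf.ℓ '' largeMeanCubes μ β f x s) := by
  have := hg.isLocallyFiniteMeasure
  let B : CubeOf μ := ⟨x, 1, one_pos, hx⟩
  have htail : Tendsto (fun a => ∫ y in (B.dil a)ᶜ, |f y| ∂μ) atTop (𝓝 0) := by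
    have h := B.aecover_dil.integral_tendsto_of_countably_generated hf.abs
    simp only [setIntegral_compl (B.measurableSet_dil _) hf.abs]
    simpa only [sub_self] using h.const_sub (∫ y, |f y| ∂μ)
  obtain ⟨a, hsmall, ha⟩ := ((htail.eventually_lt_const
    (mul_pos (sub_pos.2 hs) B.measureReal_set_pos)).and (eventually_ge_atTop 1)).exists
  refine ⟨a, forall_mem_image.2 fun Q hQ => ?_⟩
  by_contra! hℓ
  set P := (Q.pow2 1).tilde β
  have hBP : B.dil a ⊆ P.set := calc
    B.dil a ⊆ Q.dil 2 :=
      CubeOf.dil_subset_dil_two (interior_subset hQ.1) ((mul_one a).trans_le hℓ.le)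
    _ = (Q.pow2 1).set := by rw [← Q.pow2_dil_two, Q.pow2_zero]
    _ ⊆ P.set := CubeOf.subset_tilde _ β
  have hP : s - ε < |mQ μ P f| := (hosc.tilde_mem_largeMeanCubes hg hβ hQ (Q.subset_pow2 1) (by
    have := Q.ℓ_pos
    simp only [CubeOf.pow2]
    linarith)).2.2
  refine hsmall.not_ge ?_
  calc (s - ε) * μ.real B.set ≤ |mQ μ P f| * μ.real P.set := by
        gcongr
        · exact P.measure_set_ne_top
        · exact (B.subset_dil ha).trans hBP
    _ ≤ ∫ y in P.setᶜ, |f y| ∂μ := abs_mQ_mul_measureReal_le hf hf₀ P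
    _ ≤ ∫ y in (B.dil a)ᶜ, |f y| ∂μ :=
        setIntegral_mono_set hf.abs.integrableOn (.of_forall fun _ => abs_nonneg _)
          (LE.le.eventuallyLE (compl_subset_compl.2 hBP))

end BoundedSides

/-! ### Stopping cubes and the good-λ inequality -/

section StoppingCubes

variable {d n : ℕ} {C₀ β p s ε t l δ : ℝ} {μ : Measure (Euc d)} {f : Euc d → ℝ} {x : Euc d}

theorem bddAbove_ℓ_largeMeanCubes (hg : GrowthBound μ n C₀) (hβ : 2 ^ n < β)
    (hf : LocallyIntegrable f μ) (hf₀ : μ univ < ∞ → ∫ y, f y ∂μ = 0) (hp : 0 < p)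
    (hfin : ∫⁻ y, (min 1 (Nop μ β f y)) ^ p ∂μ < ∞) (hx : x ∈ measSupp μ)
    (hG : interiorMsharp μ n β f x ≠ ∞) (hosc : MeanOscBoundAt μ β f ε x) (hs₀ : 0 < s)
    (hs : ε < s) : BddAbove (CubeOf.ℓ '' largeMeanCubes μ β f x s) := by
  have := hg.isLocallyFiniteMeasure
  rcases eq_or_ne (μ univ) ∞ with hμ | hμ
  · exact bddAbove_ℓ_largeMeanCubes_of_measure_univ_eq_top hμ hf hp hfin hx hs₀
  · have : IsFiniteMeasure μ := ⟨hμ.lt_top⟩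
    exact bddAbove_ℓ_largeMeanCubes_of_integral_eq_zero hg hβ
      (integrable_of_interiorMsharp_ne_top hg hβ hf hx hG) (hf₀ hμ.lt_top) hx hosc hs

theorem MeanOscBoundAt.exists_centered_mem_largeMeanCubes (hosc : MeanOscBoundAt μ β f ε x)
    (hg : GrowthBound μ n C₀) (hβ : 2 ^ n < β) (hx : x ∈ measSupp μ) {Q : CubeOf μ}
    (hQ : Q ∈ largeMeanCubes μ β f x s) :
    ∃ V ∈ largeMeanCubes μ β f x (s - ε), V.c = x ∧ 4 * Q.ℓ ≤ V.ℓ := by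
  let P : CubeOf μ := ⟨x, 4 * Q.ℓ, mul_pos four_pos Q.ℓ_pos, hx⟩
  have hQP : Q.set ⊆ P.set := fun y hy i => by
    change |y i - x i| ≤ 4 * Q.ℓ / 2
    linarith [hy i, interior_subset hQ.1 i, abs_sub_le (y i) (Q.c i) (x i),
      abs_sub_comm (x i) (Q.c i), Q.ℓ_pos]
  exact ⟨P.tilde β, hosc.tilde_mem_largeMeanCubes hg hβ hQ hQP le_rfl, rfl, P.ℓ_le_ℓ_tilde β⟩

/-- A stopping cube at height `l`: a doubling cube inside the level set `{doublingMeanMax > l}`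
which is larger than all doubling cubes around its center on which the mean of `f` exceeds
`3 l / 2`. -/
structure IsStoppingCube (μ : Measure (Euc d)) (β : ℝ) (f : Euc d → ℝ) (l : ℝ) (S : CubeOf μ) :
    Prop where
  isDoubling : IsDoubling μ 2 β S
  subset_lt_doublingMeanMax : S.set ⊆ {y | ENNReal.ofReal l < doublingMeanMax μ β f y}
  ℓ_lt : ∀ Q ∈ largeMeanCubes μ β f S.c (3 / 2 * l), Q.ℓ < S.ℓ

theorem exists_isStoppingCube (hg : GrowthBound μ n C₀) (hβ : 2 ^ n < β) (hl : 0 < l)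
    (hx : x ∈ measSupp μ) (hosc : MeanOscBoundAt μ β f (l / 8) x)
    (hbdd : BddAbove (CubeOf.ℓ '' largeMeanCubes μ β f x (3 / 2 * l)))
    (hlarge : (largeMeanCubes μ β f x (3 / 2 * l)).Nonempty) :
    ∃ S : CubeOf μ, S.c = x ∧ IsStoppingCube μ β f l S := by
  set L := sSup (CubeOf.ℓ '' largeMeanCubes μ β f x (3 / 2 * l))
  have hle : ∀ Q ∈ largeMeanCubes μ β f x (3 / 2 * l), Q.ℓ ≤ L := fun Q hQ =>
    le_csSup hbdd (mem_image_of_mem _ hQ)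
  obtain ⟨Q₀, hQ₀⟩ := hlarge
  have hL : L / 2 < L := half_lt_self (Q₀.ℓ_pos.trans_le (hle Q₀ hQ₀))
  obtain ⟨-, ⟨Q, hQ, rfl⟩, hLQ⟩ := exists_lt_of_lt_csSup ⟨_, mem_image_of_mem _ hQ₀⟩ hL
  obtain ⟨S, hS, rfl, hQS⟩ := hosc.exists_centered_mem_largeMeanCubes hg hβ hx hQ
  refine ⟨S, rfl, hS.2.1, fun y hy => ?_, fun P hP => by linarith [hle P hP, P.ℓ_pos]⟩
  have hP := hosc.tilde_mem_largeMeanCubes hg hβ hS (S.subset_pow2 1) (by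
    simp only [CubeOf.pow2]
    linarith [S.ℓ_pos])
  refine (ofReal_lt_doublingMeanMax_iff hl.le).2 ⟨_, ?_, hP.2.1, by linarith [hP.2.2]⟩
  refine interior_mono (CubeOf.subset_tilde _ β) (CubeOf.mem_interior_set _ fun i => ?_)
  simp only [CubeOf.pow2]
  linarith [hy i, S.ℓ_pos]

namespace IsStoppingCube

variable {S : CubeOf μ}

theorem exists_subset_dil (hS : IsStoppingCube μ β f l S) (hg : GrowthBound μ n C₀)
    (hβ : 2 ^ n < β) (hl : 0 < l) (hxS : x ∈ S.set) (hx : x ∈ measSupp μ)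
    (hosc : MeanOscBoundAt μ β f (l / 8) x) (hlarge : (largeMeanCubes μ β f x (2 * l)).Nonempty) :
    ∃ V : CubeOf μ, V.c = x ∧ V.set ⊆ S.dil (5 / 4) ∧ 15 / 8 * l < |mQ μ V f| := by
  obtain ⟨Q, hQ⟩ := hlarge
  obtain ⟨V, hV, rfl, -⟩ := hosc.exists_centered_mem_largeMeanCubes hg hβ hx hQ
  refine ⟨V, rfl, ?_, by linarith [hV.2.2]⟩
  by_cases hℓ : V.ℓ ≤ S.ℓ / 4
  · intro z hz i
    linarith [hz i, hxS i, abs_sub_le (z i) (V.c i) (S.c i)]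
  -- Otherwise the doubling cube generated by `4V` contradicts the maximality of `S`.
  have hP := hosc.tilde_mem_largeMeanCubes hg hβ hV (V.subset_pow2 2) (by norm_num [CubeOf.pow2])
  have hPℓ := (V.pow2 2).ℓ_le_ℓ_tilde β
  have hc : S.c ∈ interior ((V.pow2 2).tilde β).set :=
    interior_mono (CubeOf.subset_tilde _ β) <| CubeOf.mem_interior_set _ fun i => by
      simp only [CubeOf.pow2]
      linarith [hxS i, abs_sub_comm (V.c i) (S.c i)]
  have := hS.ℓ_lt _ ⟨hc, hP.2.1, by linarith [hP.2.2]⟩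
  have hSP : S.ℓ < (V.pow2 2).ℓ := by
    simp only [CubeOf.pow2]
    linarith
  linarith

theorem abs_mQ_tilde_le (hS : IsStoppingCube μ β f l S) (hg : GrowthBound μ n C₀)
    (hβ : 2 ^ n < β) {P : CubeOf μ} (hc : S.c ∈ interior P.set) (hℓ : S.ℓ ≤ P.ℓ) :
    |mQ μ (P.tilde β) f| ≤ 3 / 2 * l := by
  by_contra! h
  exact (hS.ℓ_lt _ ⟨interior_mono (P.subset_tilde β) hc, CubeOf.isDoubling_tilde hg hβ P, h⟩).not_ge
    (hℓ.trans (P.ℓ_le_ℓ_tilde β))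

-- Every point of `A ∩ S` is the center of a cube `V ⊆ (5/4)S` whose mean differs by at least
-- `3 l / 8` from the mean over the doubling cube generated by `(5/4)S`.
theorem measure_inter_le (hS : IsStoppingCube μ β f l S) (hg : GrowthBound μ n C₀)
    (hβ : 2 ^ n < β) (hf : LocallyIntegrable f μ) (hl : 0 < l) (hδ : 0 ≤ δ)
    (hG : interiorMsharp μ n β f S.c ≤ ENNReal.ofReal (δ * l)) {A : Set (Euc d)}
    (hA : ∀ x ∈ A, x ∈ measSupp μ ∧ MeanOscBoundAt μ β f (l / 8) x ∧
      (largeMeanCubes μ β f x (2 * l)).Nonempty) :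
    μ (A ∩ S.set) ≤
      besicovitchNumber (Fin d → ℝ) * (ENNReal.ofReal (8 / 3 * β * δ) * μ S.set) := by
  have := hg.isLocallyFiniteMeasure
  set S' := S.scale (5 / 4) (by norm_num)
  have hSS' : S.ℓ ≤ S'.ℓ := le_mul_of_one_le_left S.ℓ_pos.le (by norm_num)
  have hc : S.c ∈ interior S'.set := S'.c_mem_interior_set
  set a := mQ μ (S'.tilde β) f
  have ha : |a| ≤ 3 / 2 * l := hS.abs_mQ_tilde_le hg hβ hc hSS'
  set ν : Measure (Euc d) :=
    ENNReal.ofReal (8 / (3 * l)) • μ.withDensity fun y => ENNReal.ofReal |f y - a|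
  have hν : ∀ Q : CubeOf μ, ν Q.set =
      ENNReal.ofReal (8 / (3 * l)) * ∫⁻ y in Q.set, ENNReal.ofReal |f y - a| ∂μ := fun Q => by
    rw [Measure.smul_apply, withDensity_apply _ Q.measurableSet_set, smul_eq_mul]
  have hcover : μ (A ∩ S.set) ≤ besicovitchNumber (Fin d → ℝ) * ν S'.set := by
    refine measure_le_besicovitchNumber_mul_of_cubes fun x ⟨hxA, hxS⟩ => ?_
    obtain ⟨hx, hosc, hlarge⟩ := hA x hxA
    obtain ⟨V, hVx, hVS, hV⟩ := hS.exists_subset_dil hg hβ hl hxS hx hosc hlarge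
    have hVa : 1 ≤ 8 / (3 * l) * |mQ μ V f - a| := by
      rw [div_mul_eq_mul_div, one_le_div (by positivity)]
      linarith [abs_sub_abs_le_abs_sub (mQ μ V f) a]
    refine ⟨V, hVx, hVS.trans (S.scale_set _).ge, (measure_mono inter_subset_right).trans ?_⟩
    exact hν V ▸ measure_set_le_mul_setLIntegral_abs_sub hf V (by positivity) hVa
  have hdil : μ (S'.dil (3 / 2)) ≤ ENNReal.ofReal β * μ S.set := by
    refine le_trans (measure_mono ?_) hS.isDoubling
    rw [CubeOf.scale_dil]
    exact S.dil_mono (by norm_num)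
  refine hcover.trans (mul_le_mul_right ?_ _)
  calc ν S'.set ≤ ENNReal.ofReal (8 / (3 * l)) *
        (ENNReal.ofReal (δ * l) * (ENNReal.ofReal β * μ S.set)) :=
        hν S' ▸ mul_le_mul_right ((setLIntegral_sub_tilde_le S' hc).trans (mul_le_mul' hG hdil)) _
    _ = ENNReal.ofReal (8 / 3 * β * δ) * μ S.set := by
        rw [← mul_assoc, ← mul_assoc, ← ENNReal.ofReal_mul (by positivity),
          ← ENNReal.ofReal_mul (by positivity)]
        congr 2
        field_simp

end IsStoppingCube

theorem measure_compl_measSupp (μ : Measure (Euc d)) : μ (measSupp μ)ᶜ = 0 := by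
  have h : measSupp μ = μ.support := by
    ext x
    exact nhds_basis_ball.mem_measureSupport.symm
  rw [h, ← mem_ae_iff]
  exact Measure.support_mem_ae

theorem goodLambda_doublingMeanMax (hg : GrowthBound μ n C₀) (hβ : 2 ^ n < β)
    (hf : LocallyIntegrable f μ) (hf₀ : μ univ < ∞ → ∫ y, f y ∂μ = 0) (hp : 0 < p)
    (hfin : ∫⁻ y, (min 1 (Nop μ β f y)) ^ p ∂μ < ∞) (hδ : 0 < δ)
    (hKδ : tildeKBound d n C₀ β 2 * δ ≤ 1 / 8) :
    GoodLambda μ (doublingMeanMax μ β f) (interiorMsharp μ n β f) δ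
      (besicovitchNumber (Fin d → ℝ) ^ 2 * ENNReal.ofReal (8 / 3 * β * δ)) := by
  intro l hl
  set E := {x | ENNReal.ofReal (2 * l) < doublingMeanMax μ β f x} ∩
    {x | interiorMsharp μ n β f x ≤ ENNReal.ofReal (δ * l)}
  set N := besicovitchNumber (Fin d → ℝ)
  have hE : ∀ x ∈ E ∩ measSupp μ, x ∈ measSupp μ ∧ MeanOscBoundAt μ β f (l / 8) x ∧
      (largeMeanCubes μ β f x (2 * l)).Nonempty := fun x ⟨⟨hT, hG⟩, hx⟩ =>
    ⟨hx, meanOscBoundAt_of_interiorMsharp_le hg hβ (by positivity) hG (by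
      rw [← mul_assoc]
      linarith [mul_le_mul_of_nonneg_right hKδ hl.le]),
      (ofReal_lt_doublingMeanMax_iff (by positivity)).1 hT⟩
  have hcover : μ (E ∩ measSupp μ) ≤ N * ((N * ENNReal.ofReal (8 / 3 * β * δ)) • μ)
      {x | ENNReal.ofReal l < doublingMeanMax μ β f x} := by
    refine measure_le_besicovitchNumber_mul_of_cubes fun x hxE => ?_
    obtain ⟨hx, hosc, hlarge⟩ := hE x hxE
    have hbdd := bddAbove_ℓ_largeMeanCubes (s := 3 / 2 * l) hg hβ hf hf₀ hp hfin hx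
      (ne_top_of_le_ne_top ENNReal.ofReal_ne_top hxE.1.2) hosc (by positivity) (by linarith)
    obtain ⟨S, rfl, hS⟩ := exists_isStoppingCube hg hβ hl hx hosc hbdd
      (hlarge.mono fun Q hQ => ⟨hQ.1, hQ.2.1, by linarith [hQ.2.2]⟩)
    refine ⟨S, rfl, hS.subset_lt_doublingMeanMax, ?_⟩
    rw [Measure.smul_apply, smul_eq_mul, mul_assoc]
    exact hS.measure_inter_le hg hβ hf hl hδ.le hxE.1.2 hE
  rw [← measure_inter_conull (measure_compl_measSupp μ)]
  refine hcover.trans_eq ?_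
  rw [Measure.smul_apply, smul_eq_mul]
  ring

end StoppingCubes

/-! ### The `L^p` estimate -/

section Conclusion

variable {d n : ℕ} {C₀ β p δ : ℝ} {μ : Measure (Euc d)} {f : Euc d → ℝ}

theorem exists_goodLambda_parameter (d n : ℕ) (C₀ β p : ℝ) :
    ∃ δ > 0, tildeKBound d n C₀ β 2 * δ ≤ 1 / 8 ∧
      2 ^ p * (besicovitchNumber (Fin d → ℝ) ^ 2 * ENNReal.ofReal (8 / 3 * β * δ)) ≤ 2⁻¹ := by
  have hK : Filter.Tendsto (fun δ : ℝ => tildeKBound d n C₀ β 2 * δ) (nhds 0) (nhds 0) :=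
    Continuous.tendsto' (by fun_prop) _ _ (mul_zero _)
  have hη : Filter.Tendsto (fun δ : ℝ => (2 : ℝ≥0∞) ^ p *
      (besicovitchNumber (Fin d → ℝ) ^ 2 * ENNReal.ofReal (8 / 3 * β * δ))) (nhds 0) (nhds 0) := by
    have h2 : (2 : ℝ≥0∞) ^ p ≠ ∞ := by finiteness
    refine Continuous.tendsto' ?_ _ _ (by simp)
    exact (ENNReal.continuous_const_mul h2).comp
      ((ENNReal.continuous_const_mul (by finiteness)).comp
        (ENNReal.continuous_ofReal.comp (by fun_prop)))
  obtain ⟨δ, ⟨hKδ, hηδ⟩, hδ⟩ := (((hK.eventually_lt_const (by norm_num : (0 : ℝ) < 1 / 8)).and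
    (hη.eventually_lt_const (by simp : (0 : ℝ≥0∞) < 2⁻¹))).filter_mono
      nhdsWithin_le_nhds |>.and (self_mem_nhdsWithin (s := Ioi 0))).exists
  exact ⟨δ, hδ, hKδ.le, hηδ.le⟩

theorem lintegral_Nop_rpow_le (hg : GrowthBound μ n C₀) (hβ : 2 ^ n < β) (hp : 0 < p)
    (hδ : 0 < δ) (hKδ : tildeKBound d n C₀ β 2 * δ ≤ 1 / 8)
    (hη : 2 ^ p * (besicovitchNumber (Fin d → ℝ) ^ 2 * ENNReal.ofReal (8 / 3 * β * δ)) ≤ 2⁻¹)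
    (hf : LocallyIntegrable f μ) (hf₀ : μ univ < ∞ → ∫ x, f x ∂μ = 0)
    (hfin : ∫⁻ x, (min 1 (Nop μ β f x)) ^ p ∂μ < ∞) :
    ∫⁻ x, (Nop μ β f x) ^ p ∂μ ≤
      2 ^ p * (ENNReal.ofReal β ^ p + 2 * (2 / ENNReal.ofReal δ) ^ p) *
        ∫⁻ x, (Msharp μ n β f x) ^ p ∂μ := by
  have := hg.isLocallyFiniteMeasure
  set T := doublingMeanMax μ β f
  set G := interiorMsharp μ n β f
  have hTfin : ∫⁻ x, (min 1 (T x)) ^ p ∂μ < ∞ := hfin.trans_le' <| lintegral_mono fun x => by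
    gcongr
    exact doublingMeanMax_le_Nop hf x
  have hT : ∫⁻ x, T x ^ p ∂μ ≤ 2 * (2 / ENNReal.ofReal δ) ^ p * ∫⁻ x, G x ^ p ∂μ :=
    (goodLambda_doublingMeanMax hg hβ hf hf₀ hp hfin hδ hKδ).lintegral_rpow_le
      measurable_doublingMeanMax measurable_interiorMsharp hp hδ hη hTfin
  calc ∫⁻ x, (Nop μ β f x) ^ p ∂μ
      ≤ ∫⁻ x, 2 ^ p * ((ENNReal.ofReal β * G x) ^ p + T x ^ p) ∂μ := lintegral_mono fun x =>
        (ENNReal.rpow_le_rpow (Nop_le hg hβ x) hp.le).trans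
          (ENNReal.add_rpow_le_two_rpow_mul_rpow_add_rpow _ _ hp.le)
    _ = 2 ^ p * (ENNReal.ofReal β ^ p * ∫⁻ x, G x ^ p ∂μ + ∫⁻ x, T x ^ p ∂μ) := by
        rw [lintegral_const_mul' _ _ (by finiteness),
          lintegral_add_right _ (measurable_doublingMeanMax.pow_const p),
          lintegral_const_mul_rpow measurable_interiorMsharp hp.le]
    _ ≤ 2 ^ p * (ENNReal.ofReal β ^ p * ∫⁻ x, G x ^ p ∂μ +
          2 * (2 / ENNReal.ofReal δ) ^ p * ∫⁻ x, G x ^ p ∂μ) := by gcongr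
    _ = 2 ^ p * (ENNReal.ofReal β ^ p + 2 * (2 / ENNReal.ofReal δ) ^ p) *
          ∫⁻ x, G x ^ p ∂μ := by ring
    _ ≤ _ := by
        gcongr
        exact interiorMsharp_le_Msharp _

end Conclusion

theorem statement13_general (d n : ℕ) (C₀ β p : ℝ) (hβ : (2 : ℝ) ^ n < β) (hp : 0 < p) :
    ∃ C : ℝ, 0 < C ∧ ∀ μ : Measure (Euc d), GrowthBound μ n C₀ →
      ∀ f : Euc d → ℝ, LocallyIntegrable f μ →
        (μ univ < ⊤ → ∫ x, f x ∂μ = 0) →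
        (∫⁻ x, (min 1 (Nop μ β f x)) ^ p ∂μ < ⊤) →
        (∫⁻ x, (Nop μ β f x) ^ p ∂μ) ^ (1 / p) ≤
          ENNReal.ofReal C * (∫⁻ x, (Msharp μ n β f x) ^ p ∂μ) ^ (1 / p) := by
  obtain ⟨δ, hδ, hKδ, hη⟩ := exists_goodLambda_parameter d n C₀ β p
  set A : ℝ≥0∞ := 2 ^ p * (ENNReal.ofReal β ^ p + 2 * (2 / ENNReal.ofReal δ) ^ p)
  have hp' : 0 ≤ 1 / p := by positivity
  have hA : A ≠ ∞ := by
    have := ENNReal.div_ne_top (ENNReal.ofNat_ne_top (n := 2)) (ENNReal.ofReal_pos.2 hδ).ne'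
    finiteness [hp.le]
  have hA₀ : 0 < A := by
    have hβ₀ : 0 < ENNReal.ofReal β := ENNReal.ofReal_pos.2 (hβ.trans' (by positivity))
    exact ENNReal.mul_pos (ENNReal.rpow_pos two_pos ENNReal.ofNat_ne_top).ne'
      (ENNReal.rpow_pos hβ₀ ENNReal.ofReal_ne_top |>.trans_le le_self_add).ne'
  have hC : A ^ (1 / p) ≠ ∞ := ENNReal.rpow_ne_top_of_nonneg hp' hA
  refine ⟨(A ^ (1 / p)).toReal, ENNReal.toReal_pos (ENNReal.rpow_pos hA₀ hA).ne' hC,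
    fun μ hg f hf hf₀ hfin => ?_⟩
  rw [ENNReal.ofReal_toReal hC, ← ENNReal.mul_rpow_of_nonneg _ _ hp']
  exact ENNReal.rpow_le_rpow (lintegral_Nop_rpow_le hg hβ hp hδ hKδ hη hf hf₀ hfin) hp'

/-- Theorem 6.2: the good-`λ` estimate for the sharp maximal operator:
`‖N f‖_{L^p(μ)} ≤ C ‖M^♯ f‖_{L^p(μ)}` whenever `min(1, N f) ∈ L^p(μ)`. -/
theorem statement13 (d n : ℕ) (hn : 1 ≤ n) (hnd : n ≤ d) (C₀ βd p : ℝ)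
    (hC₀ : 0 < C₀) (hβ : (2 : ℝ) ^ n < βd) (hp : 1 < p) :
    ∃ C : ℝ, 0 < C ∧ ∀ μ : MeasureTheory.Measure (Euc d), GrowthBound μ n C₀ →
      SmallDoublingAE μ βd →
      ∀ f : Euc d → ℝ, MeasureTheory.LocallyIntegrable f μ →
        (μ Set.univ < ⊤ → ∫ x, f x ∂μ = 0) →
        (∫⁻ x, (min 1 (Nop μ βd f x)) ^ p ∂μ < ⊤) →
        (∫⁻ x, (Nop μ βd f x) ^ p ∂μ) ^ (1 / p) ≤
          ENNReal.ofReal C * (∫⁻ x, (Msharp μ n βd f x) ^ p ∂μ) ^ (1 / p) := by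
  obtain ⟨C, hC, h⟩ := statement13_general d n C₀ βd p hβ (one_pos.trans hp)
  exact ⟨C, hC, fun μ hg _ => h μ hg⟩
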